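/- Let φ₀, φ₁ ∈ C₀^∞(ℝ²), let u⁰ be the smooth solution of □u⁰ = 0 with u⁰(0) = φ₀, ∂ₜu⁰(0) = φ₁, and set U⁰(t,x) = D(|x|^{1/2}u⁰(t,x)). There is a constant C = C(φ₀,φ₁) > 0 such that for every ε > 0, every t ≥ 0 and every x with |x| ≥ 1/(2ε): |U⁰(t,x) − ∂_σF₀[φ₀,φ₁](|x|−t, x/|x|)| ≤ Cε. Consequently, with V⁰(t;σ,ω) = U⁰(t,(t+σ)ω), one has |V⁰(t;σ,ω) − ∂_σF₀[φ₀,φ₁](σ,ω)| ≤ Cε whenever t + σ ≥ 1/(2ε). -/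

import Mathlib

/-!
The estimate is a rate of convergence along outgoing light rays. In the direction `ω`, write
`v(r) = D(|x|^{1/2} u)` at the point `(t, x) = (r - σ, r ω)`. In polar coordinates the wave equation
becomes the transport equation `v' = -½ r^{-3/2} (Ω² u + u / 4)` with `Ω` the rotation field
(`FreeSol.hasDerivAt_ray`). As `u` and `Ω² u` are free waves with compactly supported data, both are
`O(r^{-1/2})` uniformly in time and direction (`FreeSol.decay`), so `v' = O(r^{-2})` and `v(r)` differs
by `O(1 / r)` from its limit as `r → ∞` (`abs_sub_le_of_hasDerivAt`). It remains to see that this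
limit is `∂_σ F₀(σ, ω)` (`FreeSol.tendsto_dF0`). Finally `1 / r ≤ 2 ε` when `r ≥ 1 / (2 ε)`.

Both the decay and the limit are read off Kirchhoff's formula (`kirchhoff`). The solution is viewed
as a solution on `ℝ³` independent of the third variable, and the spherical mean of
`w + (t - s)(∂ₜ w + ∂_θ w)` over the backward light cone is independent of `s`, because its
`s`-derivative is the integral of a Laplace–Beltrami operator over the sphere. The sphere is
parametrised by angles `(γ, β)` around the direction of the ray:

* decay: the integrand is `O(t)`, supported in `|β| ≲ 1 / t` and in a set of `γ` of measure
  `≲ t^{-1/2}`;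
* limit: with `γ = η / √t` and `β = b / t` the rescaled integrand converges boundedly on a fixed
  rectangle, and `4 π √r u` tends to the integral of `∂ₜ u - ∂₁ u` at time zero over the points
  `(σ + η² / 2, b)` (`FreeSol.tendsto_ray`). The substitution `s = σ + η² / 2` identifies this
  integral with `R₂` (`R2_eq_halfInt`), and applying the limit to the free wave `(∂₁ - ∂ₜ) u` gives
  `∂_σ F₀`, because line integrals of `∂₂`-derivatives vanish.

A rotation of the plane (`turn`) reduces every direction `ω` to `(1, 0)`.
-/

open Real MeasureTheory Filter Topology

noncomputable section

/-- Partial derivative in `t`. -/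
def pt (u : ℝ → ℝ → ℝ → ℝ) : ℝ → ℝ → ℝ → ℝ :=
  fun t x1 x2 => deriv (fun s => u s x1 x2) t

/-- Partial derivative in `x₁`. -/
def p1 (u : ℝ → ℝ → ℝ → ℝ) : ℝ → ℝ → ℝ → ℝ :=
  fun t x1 x2 => deriv (fun y => u t y x2) x1

/-- Partial derivative in `x₂`. -/
def p2 (u : ℝ → ℝ → ℝ → ℝ) : ℝ → ℝ → ℝ → ℝ :=
  fun t x1 x2 => deriv (fun y => u t x1 y) x2

/-- The d'Alembertian `□ = ∂ₜ² − ∂₁² − ∂₂²`. -/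
def dAlembert (u : ℝ → ℝ → ℝ → ℝ) : ℝ → ℝ → ℝ → ℝ :=
  fun t x1 x2 => pt (pt u) t x1 x2 - p1 (p1 u) t x1 x2 - p2 (p2 u) t x1 x2

/-- `u : ℝ×ℝ² → ℝ` (curried) is C^∞. -/
def Smooth3 (u : ℝ → ℝ → ℝ → ℝ) : Prop :=
  ContDiff ℝ (⊤ : ℕ∞) (fun p : ℝ × ℝ × ℝ => u p.1 p.2.1 p.2.2)

/-- Compactly supported C^∞ function on ℝ². -/
def SmoothCompact2 (f : ℝ → ℝ → ℝ) : Prop :=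
  ContDiff ℝ (⊤ : ℕ∞) (fun p : ℝ × ℝ => f p.1 p.2) ∧
    HasCompactSupport (fun p : ℝ × ℝ => f p.1 p.2)

/-- Global C^∞ solution of the Cauchy problem
`□u₁ = −(∂ₜu₂)²∂ₜu₁`, `□u₂ = −(∂ₜu₁)²∂ₜu₂` with data `(εf_j, εg_j)`. -/
structure IsSolution (ε : ℝ) (f1 f2 g1 g2 : ℝ → ℝ → ℝ)
    (u1 u2 : ℝ → ℝ → ℝ → ℝ) : Prop where
  smooth1 : Smooth3 u1
  smooth2 : Smooth3 u2
  pde1 : ∀ t x1 x2 : ℝ, 0 < t →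
    dAlembert u1 t x1 x2 = -(pt u2 t x1 x2) ^ 2 * pt u1 t x1 x2
  pde2 : ∀ t x1 x2 : ℝ, 0 < t →
    dAlembert u2 t x1 x2 = -(pt u1 t x1 x2) ^ 2 * pt u2 t x1 x2
  init1 : ∀ x1 x2 : ℝ, u1 0 x1 x2 = ε * f1 x1 x2
  init2 : ∀ x1 x2 : ℝ, u2 0 x1 x2 = ε * f2 x1 x2
  initd1 : ∀ x1 x2 : ℝ, pt u1 0 x1 x2 = ε * g1 x1 x2
  initd2 : ∀ x1 x2 : ℝ, pt u2 0 x1 x2 = ε * g2 x1 x2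

/-- `‖u(t)‖_E²  = ½∫ ((∂ₜu)² + (∂₁u)² + (∂₂u)²) dx`. -/
def energySq (u : ℝ → ℝ → ℝ → ℝ) (t : ℝ) : ℝ :=
  (1 / 2) * ∫ x : ℝ × ℝ,
    ((pt u t x.1 x.2) ^ 2 + (p1 u t x.1 x.2) ^ 2 + (p2 u t x.1 x.2) ^ 2)

/-- The energy norm `‖u(t)‖_E`. -/
def energyNorm (u : ℝ → ℝ → ℝ → ℝ) (t : ℝ) : ℝ :=
  Real.sqrt (energySq u t)

/-- `|x|` in coordinates. -/
def radius (x1 x2 : ℝ) : ℝ := Real.sqrt (x1 ^ 2 + x2 ^ 2)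

/-- The Japanese bracket `⟨z⟩ = (1+z²)^{1/2}`. -/
def jb (z : ℝ) : ℝ := Real.sqrt (1 + z ^ 2)

/-- `U(t,x) = D(|x|^{1/2}u(t,x))` where `D = ½(∂_r − ∂ₜ)`. -/
def Uop (u : ℝ → ℝ → ℝ → ℝ) : ℝ → ℝ → ℝ → ℝ :=
  fun t x1 x2 =>
    (1 / 2) * ((x1 / radius x1 x2) *
        p1 (fun s y1 y2 => radius y1 y2 ^ ((1 : ℝ) / 2) * u s y1 y2) t x1 x2
      + (x2 / radius x1 x2) *
        p2 (fun s y1 y2 => radius y1 y2 ^ ((1 : ℝ) / 2) * u s y1 y2) t x1 x2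
      - pt (fun s y1 y2 => radius y1 y2 ^ ((1 : ℝ) / 2) * u s y1 y2) t x1 x2)

/-- `V(t;σ,ω) = U(t,(t+σ)ω)`. -/
def Vop (u : ℝ → ℝ → ℝ → ℝ) (t σ ω1 ω2 : ℝ) : ℝ :=
  Uop u t ((t + σ) * ω1) ((t + σ) * ω2)

/-- The rotation vector field `Ω = x₁∂₂ − x₂∂₁`. -/
def rot (u : ℝ → ℝ → ℝ → ℝ) : ℝ → ℝ → ℝ → ℝ :=
  fun t x1 x2 => x1 * p2 u t x1 x2 - x2 * p1 u t x1 x2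

/-- `H` for component `a` (the other component being `b`):
`H_a = ½(|x|^{1/2}(∂ₜu_b)²(∂ₜu_a) + t⁻¹U_b²U_a) − (8|x|^{3/2})⁻¹(4Ω²+1)u_a`. -/
def Hfun (ua ub : ℝ → ℝ → ℝ → ℝ) (t x1 x2 : ℝ) : ℝ :=
  (1 / 2) * (radius x1 x2 ^ ((1 : ℝ) / 2) * (pt ub t x1 x2) ^ 2 * pt ua t x1 x2
      + (1 / t) * (Uop ub t x1 x2) ^ 2 * Uop ua t x1 x2)
    - (1 / (8 * radius x1 x2 ^ ((3 : ℝ) / 2))) *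
        (4 * rot (rot ua) t x1 x2 + ua t x1 x2)

/-- `K_a(t;σ,ω) = H_a(t,(t+σ)ω)`. -/
def Kfun (ua ub : ℝ → ℝ → ℝ → ℝ) (t σ ω1 ω2 : ℝ) : ℝ :=
  Hfun ua ub t ((t + σ) * ω1) ((t + σ) * ω2)

/-- `ρ = V₁K₁ − V₂K₂`. -/
def rhoFun (u1 u2 : ℝ → ℝ → ℝ → ℝ) (t σ ω1 ω2 : ℝ) : ℝ :=
  Vop u1 t σ ω1 ω2 * Kfun u1 u2 t σ ω1 ω2 -
    Vop u2 t σ ω1 ω2 * Kfun u2 u1 t σ ω1 ω2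

/-- The Radon transform: line integral of `φ` over `{y : y·ω = s}`. -/
def Rline (φ : ℝ → ℝ → ℝ) (s ω1 ω2 : ℝ) : ℝ :=
  ∫ τ : ℝ, φ (s * ω1 - τ * ω2) (s * ω2 + τ * ω1)

/-- `R₂[φ](σ,ω) = (2√2π)⁻¹ ∫_σ^∞ R[φ](s,ω)(s−σ)^{−1/2} ds`. -/
def R2 (φ : ℝ → ℝ → ℝ) (σ ω1 ω2 : ℝ) : ℝ :=
  (1 / (2 * Real.sqrt 2 * Real.pi)) *
    ∫ s in Set.Ioi σ, Rline φ s ω1 ω2 / Real.sqrt (s - σ)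

/-- The Friedlander radiation field `F₀[φ,ψ] = −∂_σR₂[φ] + R₂[ψ]`. -/
def F0 (φ ψ : ℝ → ℝ → ℝ) (σ ω1 ω2 : ℝ) : ℝ :=
  -deriv (fun σ' => R2 φ σ' ω1 ω2) σ + R2 ψ σ ω1 ω2

/-- `∂_σF₀[φ,ψ]`. -/
def dF0 (φ ψ : ℝ → ℝ → ℝ) (σ ω1 ω2 : ℝ) : ℝ :=
  deriv (fun σ' => F0 φ ψ σ' ω1 ω2) σ

/-- The vector fields `Γ = (S, L₁, L₂, Ω, ∂ₜ, ∂₁, ∂₂)`. -/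
def Gam (i : Fin 7) (u : ℝ → ℝ → ℝ → ℝ) : ℝ → ℝ → ℝ → ℝ :=
  match i with
  | 0 => fun t x1 x2 => t * pt u t x1 x2 + x1 * p1 u t x1 x2 + x2 * p2 u t x1 x2
  | 1 => fun t x1 x2 => t * p1 u t x1 x2 + x1 * pt u t x1 x2
  | 2 => fun t x1 x2 => t * p2 u t x1 x2 + x2 * pt u t x1 x2
  | 3 => rot u
  | 4 => pt u
  | 5 => p1 u
  | 6 => p2 u

/-- `Γ^α = Γ₀^{α₀}⋯Γ₆^{α₆}`. -/
def GamMulti (α : Fin 7 → ℕ) (u : ℝ → ℝ → ℝ → ℝ) : ℝ → ℝ → ℝ → ℝ :=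
  (Gam 0)^[α 0] ((Gam 1)^[α 1] ((Gam 2)^[α 2] ((Gam 3)^[α 3]
    ((Gam 4)^[α 4] ((Gam 5)^[α 5] ((Gam 6)^[α 6] u))))))

/-- Pointwise norm `|φ(t,x)|_s = Σ_{|α|≤s}|Γ^αφ(t,x)|`, for a (finite) family of
components, `|Γ^αφ|` being the Euclidean norm of the vector of components. -/
def ptwiseNorm (s : ℕ) (us : List (ℝ → ℝ → ℝ → ℝ)) (t x1 x2 : ℝ) : ℝ :=
  ∑ α : Fin 7 → Fin (s + 1),
    if (∑ i, (α i : ℕ)) ≤ s then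
      Real.sqrt ((us.map fun u => (GamMulti (fun i => (α i : ℕ)) u t x1 x2) ^ 2).sum)
    else 0

/-- `‖φ(t)‖_s = Σ_{|α|≤s}‖Γ^αφ(t,·)‖_{L²(ℝ²)}`. -/
def sobNorm (s : ℕ) (us : List (ℝ → ℝ → ℝ → ℝ)) (t : ℝ) : ℝ :=
  ∑ α : Fin 7 → Fin (s + 1),
    if (∑ i, (α i : ℕ)) ≤ s then
      Real.sqrt (∫ x : ℝ × ℝ,
        (us.map fun u => (GamMulti (fun i => (α i : ℕ)) u t x.1 x.2) ^ 2).sum)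
    else 0

/-- The components of `∂u = (∂ₜu₁,∂₁u₁,∂₂u₁,∂ₜu₂,∂₁u₂,∂₂u₂)`. -/
def dList (u1 u2 : ℝ → ℝ → ℝ → ℝ) : List (ℝ → ℝ → ℝ → ℝ) :=
  [pt u1, p1 u1, p2 u1, pt u2, p1 u2, p2 u2]

/-- Smooth solution of the free wave equation with data `(φ0,φ1)`. -/
def IsFreeSolution (φ0 φ1 : ℝ → ℝ → ℝ) (φ : ℝ → ℝ → ℝ → ℝ) : Prop :=
  Smooth3 φ ∧ (∀ t x1 x2 : ℝ, 0 < t → dAlembert φ t x1 x2 = 0) ∧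
    (∀ x1 x2 : ℝ, φ 0 x1 x2 = φ0 x1 x2) ∧
    (∀ x1 x2 : ℝ, pt φ 0 x1 x2 = φ1 x1 x2)

/-- Mixed space-time partial `∂^α = ∂ₜ^{α₀}∂₁^{α₁}∂₂^{α₂}`. -/
def dmix (α : Fin 3 → ℕ) (u : ℝ → ℝ → ℝ → ℝ) : ℝ → ℝ → ℝ → ℝ :=
  pt^[α 0] (p1^[α 1] (p2^[α 2] u))

/-! ### Calculus of smooth functions on space-time -/

theorem Smooth3.comp_hasDerivAt {u : ℝ → ℝ → ℝ → ℝ} (hu : Smooth3 u) {f g h : ℝ → ℝ}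
    {f' g' h' s : ℝ} (hf : HasDerivAt f f' s) (hg : HasDerivAt g g' s) (hh : HasDerivAt h h' s) :
    HasDerivAt (fun s => u (f s) (g s) (h s))
      (fderiv ℝ (fun p : ℝ × ℝ × ℝ => u p.1 p.2.1 p.2.2) (f s, g s, h s) (f', g', h')) s := by
  have h1 : DifferentiableAt ℝ (fun p : ℝ × ℝ × ℝ => u p.1 p.2.1 p.2.2) (f s, g s, h s) :=
    hu.differentiable (by simp) _
  exact h1.hasFDerivAt.comp_hasDerivAt s (hf.prodMk (hg.prodMk hh))

theorem Smooth3.pt_eq {u : ℝ → ℝ → ℝ → ℝ} (hu : Smooth3 u) (t x y : ℝ) :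
    pt u t x y = fderiv ℝ (fun p : ℝ × ℝ × ℝ => u p.1 p.2.1 p.2.2) (t, x, y) (1, 0, 0) :=
  (hu.comp_hasDerivAt (hasDerivAt_id t) (hasDerivAt_const t x) (hasDerivAt_const t y)).deriv

theorem Smooth3.p1_eq {u : ℝ → ℝ → ℝ → ℝ} (hu : Smooth3 u) (t x y : ℝ) :
    p1 u t x y = fderiv ℝ (fun p : ℝ × ℝ × ℝ => u p.1 p.2.1 p.2.2) (t, x, y) (0, 1, 0) :=
  (hu.comp_hasDerivAt (hasDerivAt_const x t) (hasDerivAt_id x) (hasDerivAt_const x y)).deriv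

theorem Smooth3.p2_eq {u : ℝ → ℝ → ℝ → ℝ} (hu : Smooth3 u) (t x y : ℝ) :
    p2 u t x y = fderiv ℝ (fun p : ℝ × ℝ × ℝ => u p.1 p.2.1 p.2.2) (t, x, y) (0, 0, 1) :=
  (hu.comp_hasDerivAt (hasDerivAt_const y t) (hasDerivAt_const y x) (hasDerivAt_id y)).deriv

/-- The chain rule for a smooth function along a curve in space-time, in terms of `pt`, `p1`,
`p2`. -/
theorem Smooth3.chain {u : ℝ → ℝ → ℝ → ℝ} (hu : Smooth3 u) {f g h : ℝ → ℝ}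
    {f' g' h' s : ℝ} (hf : HasDerivAt f f' s) (hg : HasDerivAt g g' s) (hh : HasDerivAt h h' s) :
    HasDerivAt (fun s => u (f s) (g s) (h s))
      (f' * pt u (f s) (g s) (h s) + g' * p1 u (f s) (g s) (h s)
        + h' * p2 u (f s) (g s) (h s)) s := by
  refine (hu.comp_hasDerivAt hf hg hh).congr_deriv ?_
  rw [hu.pt_eq, hu.p1_eq, hu.p2_eq]
  have : ((f', g', h') : ℝ × ℝ × ℝ) = f' • (1, 0, 0) + g' • (0, 1, 0) + h' • (0, 0, 1) := by
    simp
  rw [this]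
  simp only [map_add, map_smul, smul_eq_mul]

theorem Smooth3.fderiv_apply {u : ℝ → ℝ → ℝ → ℝ} (hu : Smooth3 u) (v : ℝ × ℝ × ℝ) :
    Smooth3 (fun t x y =>
      fderiv ℝ (fun p : ℝ × ℝ × ℝ => u p.1 p.2.1 p.2.2) (t, x, y) v) := by
  have h1 : ContDiff ℝ (⊤ : ℕ∞) (fderiv ℝ (fun p : ℝ × ℝ × ℝ => u p.1 p.2.1 p.2.2)) :=
    ContDiff.fderiv_right hu (by simp)
  exact h1.clm_apply contDiff_const

theorem Smooth3.dt {u : ℝ → ℝ → ℝ → ℝ} (hu : Smooth3 u) : Smooth3 (pt u) := by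
  have := hu.fderiv_apply (1, 0, 0)
  simp only [← hu.pt_eq] at this
  exact this

theorem Smooth3.dx {u : ℝ → ℝ → ℝ → ℝ} (hu : Smooth3 u) : Smooth3 (p1 u) := by
  have := hu.fderiv_apply (0, 1, 0)
  simp only [← hu.p1_eq] at this
  exact this

theorem Smooth3.dy {u : ℝ → ℝ → ℝ → ℝ} (hu : Smooth3 u) : Smooth3 (p2 u) := by
  have := hu.fderiv_apply (0, 0, 1)
  simp only [← hu.p2_eq] at this
  exact this

theorem Smooth3.cont {u : ℝ → ℝ → ℝ → ℝ} (hu : Smooth3 u) {X : Type*} [TopologicalSpace X]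
    {f g h : X → ℝ} (hf : Continuous f) (hg : Continuous g) (hh : Continuous h) :
    Continuous (fun s => u (f s) (g s) (h s)) :=
  (ContDiff.continuous hu).comp (hf.prodMk (hg.prodMk hh))

theorem Smooth3.fderiv_comm {u : ℝ → ℝ → ℝ → ℝ} (hu : Smooth3 u) (p v w : ℝ × ℝ × ℝ) :
    fderiv ℝ (fun q => fderiv ℝ (fun p : ℝ × ℝ × ℝ => u p.1 p.2.1 p.2.2) q v) p w =
    fderiv ℝ (fun q => fderiv ℝ (fun p : ℝ × ℝ × ℝ => u p.1 p.2.1 p.2.2) q w) p v := by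
  have h1 : ContDiff ℝ (⊤ : ℕ∞) (fderiv ℝ (fun p : ℝ × ℝ × ℝ => u p.1 p.2.1 p.2.2)) :=
    ContDiff.fderiv_right hu (by simp)
  have h2 : DifferentiableAt ℝ (fderiv ℝ (fun p : ℝ × ℝ × ℝ => u p.1 p.2.1 p.2.2)) p :=
    h1.differentiable (by simp) _
  have key : ∀ v w, fderiv ℝ (fun q => fderiv ℝ (fun p : ℝ × ℝ × ℝ => u p.1 p.2.1 p.2.2) q v) p w
      = fderiv ℝ (fderiv ℝ (fun p : ℝ × ℝ × ℝ => u p.1 p.2.1 p.2.2)) p w v := by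
    intro v w
    rw [fderiv_clm_apply h2 (by fun_prop)]
    simp
  rw [key, key]
  have h3 : ContDiffAt ℝ (⊤ : ℕ∞) (fun p : ℝ × ℝ × ℝ => u p.1 p.2.1 p.2.2) p := ContDiff.contDiffAt hu
  refine (h3.isSymmSndFDerivAt ?_) w v
  rw [minSmoothness_of_isRCLikeNormedField]
  exact WithTop.coe_le_coe.2 (le_top : (2 : ℕ∞) ≤ ⊤)

theorem Smooth3.p1_pt {u : ℝ → ℝ → ℝ → ℝ} (hu : Smooth3 u) : p1 (pt u) = pt (p1 u) := by
  funext t x y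
  rw [hu.dt.p1_eq, hu.dx.pt_eq]
  simp only [hu.pt_eq, hu.p1_eq]
  exact hu.fderiv_comm _ _ _

theorem Smooth3.p2_pt {u : ℝ → ℝ → ℝ → ℝ} (hu : Smooth3 u) : p2 (pt u) = pt (p2 u) := by
  funext t x y
  rw [hu.dt.p2_eq, hu.dy.pt_eq]
  simp only [hu.pt_eq, hu.p2_eq]
  exact hu.fderiv_comm _ _ _

theorem Smooth3.p2_p1 {u : ℝ → ℝ → ℝ → ℝ} (hu : Smooth3 u) : p2 (p1 u) = p1 (p2 u) := by
  funext t x y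
  rw [hu.dx.p2_eq, hu.dy.p1_eq]
  simp only [hu.p1_eq, hu.p2_eq]
  exact hu.fderiv_comm _ _ _

theorem Smooth3.hasDerivAt_t {u : ℝ → ℝ → ℝ → ℝ} (hu : Smooth3 u) (t x y : ℝ) :
    HasDerivAt (fun s => u s x y) (pt u t x y) t := by
  simpa using hu.chain (hasDerivAt_id t) (hasDerivAt_const t x) (hasDerivAt_const t y)

theorem Smooth3.hasDerivAt_x {u : ℝ → ℝ → ℝ → ℝ} (hu : Smooth3 u) (t x y : ℝ) :
    HasDerivAt (fun s => u t s y) (p1 u t x y) x := by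
  simpa using hu.chain (hasDerivAt_const x t) (hasDerivAt_id x) (hasDerivAt_const x y)

theorem Smooth3.hasDerivAt_y {u : ℝ → ℝ → ℝ → ℝ} (hu : Smooth3 u) (t x y : ℝ) :
    HasDerivAt (fun s => u t x s) (p2 u t x y) y := by
  simpa using hu.chain (hasDerivAt_const y t) (hasDerivAt_const y x) (hasDerivAt_id y)

/-! ### Symmetries of the wave equation -/

/-- A smooth function on space-time solving the free wave equation for positive times, with
Cauchy data at time zero vanishing outside the disc of radius `R`. -/
structure FreeSol (R : ℝ) (u : ℝ → ℝ → ℝ → ℝ) : Prop where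
  smooth : Smooth3 u
  pde : ∀ t x y : ℝ, 0 < t → dAlembert u t x y = 0
  supp0 : ∀ x y : ℝ, R ^ 2 < x ^ 2 + y ^ 2 → u 0 x y = 0
  supp1 : ∀ x y : ℝ, R ^ 2 < x ^ 2 + y ^ 2 → pt u 0 x y = 0

theorem Smooth3.sub {u v : ℝ → ℝ → ℝ → ℝ} (hu : Smooth3 u) (hv : Smooth3 v) :
    Smooth3 (fun t x y => u t x y - v t x y) := by
  have := ContDiff.sub hu hv
  exact this

theorem Smooth3.drot {u : ℝ → ℝ → ℝ → ℝ} (hu : Smooth3 u) : Smooth3 (rot u) := by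
  have h1 : ContDiff ℝ (⊤ : ℕ∞) (fun p : ℝ × ℝ × ℝ => p.2.1) := by fun_prop
  have h2 : ContDiff ℝ (⊤ : ℕ∞) (fun p : ℝ × ℝ × ℝ => p.2.2) := by fun_prop
  have := (h1.mul hu.dy).sub (h2.mul hu.dx)
  exact this

theorem Smooth3.pt_rot {u : ℝ → ℝ → ℝ → ℝ} (hu : Smooth3 u) :
    pt (rot u) = rot (pt u) := by
  funext t x y
  have := ((hu.dy.hasDerivAt_t t x y).const_mul x).sub ((hu.dx.hasDerivAt_t t x y).const_mul y)
  unfold rot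
  rw [hu.p1_pt, hu.p2_pt]
  exact this.deriv

theorem Smooth3.p1_rot {u : ℝ → ℝ → ℝ → ℝ} (hu : Smooth3 u) (t x y : ℝ) :
    p1 (rot u) t x y = rot (p1 u) t x y + p2 u t x y := by
  have := ((hasDerivAt_id x).mul (hu.dy.hasDerivAt_x t x y)).sub
    ((hu.dx.hasDerivAt_x t x y).const_mul y)
  unfold rot
  rw [hu.p2_p1]
  refine this.deriv.trans ?_
  simp; ring

theorem Smooth3.p2_rot {u : ℝ → ℝ → ℝ → ℝ} (hu : Smooth3 u) (t x y : ℝ) :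
    p2 (rot u) t x y = rot (p2 u) t x y - p1 u t x y := by
  have := ((hu.dy.hasDerivAt_y t x y).const_mul x).sub
    ((hasDerivAt_id y).mul (hu.dx.hasDerivAt_y t x y))
  unfold rot
  rw [← hu.p2_p1]
  refine this.deriv.trans ?_
  simp; ring


theorem Smooth3.add {u v : ℝ → ℝ → ℝ → ℝ} (hu : Smooth3 u) (hv : Smooth3 v) :
    Smooth3 (fun t x y => u t x y + v t x y) := by
  have := ContDiff.add hu hv
  exact this

theorem Smooth3.dAlembert {u : ℝ → ℝ → ℝ → ℝ} (hu : Smooth3 u) : Smooth3 (dAlembert u) :=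
  (hu.dt.dt.sub hu.dx.dx).sub hu.dy.dy

theorem FreeSol.pde0 {R : ℝ} {u : ℝ → ℝ → ℝ → ℝ} (hu : FreeSol R u) {t : ℝ} (ht : 0 ≤ t)
    (x y : ℝ) : pt (pt u) t x y = p1 (p1 u) t x y + p2 (p2 u) t x y := by
  have hc : Continuous (fun t => dAlembert u t x y) :=
    hu.smooth.dAlembert.cont continuous_id continuous_const continuous_const
  have h0 : Set.EqOn (fun t => dAlembert u t x y) (fun _ => 0) (closure (Set.Ioi 0)) :=
    Set.EqOn.closure (fun s hs => hu.pde s x y hs) hc continuous_const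
  have := h0 (show t ∈ closure (Set.Ioi 0) by rw [closure_Ioi]; exact ht)
  simp only [dAlembert] at this
  linarith

theorem isOpen_far (R : ℝ) : IsOpen {p : ℝ × ℝ | R ^ 2 < p.1 ^ 2 + p.2 ^ 2} :=
  isOpen_lt (by fun_prop) (by fun_prop)

theorem eventually_far_x {R x y : ℝ} (h : R ^ 2 < x ^ 2 + y ^ 2) :
    ∀ᶠ s in 𝓝 x, R ^ 2 < s ^ 2 + y ^ 2 :=
  ContinuousAt.eventually_lt (by fun_prop) (by fun_prop) h

theorem eventually_far_y {R x y : ℝ} (h : R ^ 2 < x ^ 2 + y ^ 2) :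
    ∀ᶠ s in 𝓝 y, R ^ 2 < x ^ 2 + s ^ 2 :=
  ContinuousAt.eventually_lt (by fun_prop) (by fun_prop) h

theorem p1_zero_of_far {R : ℝ} {u : ℝ → ℝ → ℝ → ℝ}
    (h : ∀ x y : ℝ, R ^ 2 < x ^ 2 + y ^ 2 → u 0 x y = 0) (x y : ℝ)
    (hxy : R ^ 2 < x ^ 2 + y ^ 2) : p1 u 0 x y = 0 := by
  have : (fun s => u 0 s y) =ᶠ[𝓝 x] fun _ => 0 :=
    (eventually_far_x hxy).mono fun s hs => h s y hs
  unfold p1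
  rw [this.deriv_eq]; simp

theorem p2_zero_of_far {R : ℝ} {u : ℝ → ℝ → ℝ → ℝ}
    (h : ∀ x y : ℝ, R ^ 2 < x ^ 2 + y ^ 2 → u 0 x y = 0) (x y : ℝ)
    (hxy : R ^ 2 < x ^ 2 + y ^ 2) : p2 u 0 x y = 0 := by
  have : (fun s => u 0 x s) =ᶠ[𝓝 y] fun _ => 0 :=
    (eventually_far_y hxy).mono fun s hs => h x s hs
  unfold p2
  rw [this.deriv_eq]; simp

theorem FreeSol.suppx {R : ℝ} {u : ℝ → ℝ → ℝ → ℝ} (hu : FreeSol R u) (x y : ℝ)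
    (h : R ^ 2 < x ^ 2 + y ^ 2) : p1 u 0 x y = 0 := p1_zero_of_far hu.supp0 x y h

theorem FreeSol.suppy {R : ℝ} {u : ℝ → ℝ → ℝ → ℝ} (hu : FreeSol R u) (x y : ℝ)
    (h : R ^ 2 < x ^ 2 + y ^ 2) : p2 u 0 x y = 0 := p2_zero_of_far hu.supp0 x y h

theorem FreeSol.sub {R : ℝ} {u v : ℝ → ℝ → ℝ → ℝ} (hu : FreeSol R u) (hv : FreeSol R v) :
    FreeSol R (fun t x y => u t x y - v t x y) where
  smooth := hu.smooth.sub hv.smooth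
  pde t x y ht := by
    have e1 : ∀ {u v : ℝ → ℝ → ℝ → ℝ}, Smooth3 u → Smooth3 v →
        pt (fun t x y => u t x y - v t x y) = fun t x y => pt u t x y - pt v t x y := by
      intro u v hu hv; funext t x y
      exact ((hu.hasDerivAt_t t x y).sub (hv.hasDerivAt_t t x y)).deriv
    have e2 : ∀ {u v : ℝ → ℝ → ℝ → ℝ}, Smooth3 u → Smooth3 v →
        p1 (fun t x y => u t x y - v t x y) = fun t x y => p1 u t x y - p1 v t x y := by
      intro u v hu hv; funext t x y
      exact ((hu.hasDerivAt_x t x y).sub (hv.hasDerivAt_x t x y)).deriv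
    have e3 : ∀ {u v : ℝ → ℝ → ℝ → ℝ}, Smooth3 u → Smooth3 v →
        p2 (fun t x y => u t x y - v t x y) = fun t x y => p2 u t x y - p2 v t x y := by
      intro u v hu hv; funext t x y
      exact ((hu.hasDerivAt_y t x y).sub (hv.hasDerivAt_y t x y)).deriv
    have h1 := hu.pde t x y ht
    have h2 := hv.pde t x y ht
    unfold dAlembert at h1 h2 ⊢
    rw [e1 hu.smooth hv.smooth, e2 hu.smooth hv.smooth, e3 hu.smooth hv.smooth,
      e1 hu.smooth.dt hv.smooth.dt, e2 hu.smooth.dx hv.smooth.dx, e3 hu.smooth.dy hv.smooth.dy]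
    linarith
  supp0 x y h := by rw [hu.supp0 x y h, hv.supp0 x y h, sub_zero]
  supp1 x y h := by
    have : pt (fun t x y => u t x y - v t x y) 0 x y = pt u 0 x y - pt v 0 x y :=
      ((hu.smooth.hasDerivAt_t 0 x y).sub (hv.smooth.hasDerivAt_t 0 x y)).deriv
    rw [this, hu.supp1 x y h, hv.supp1 x y h, sub_zero]

theorem FreeSol.dt {R : ℝ} {u : ℝ → ℝ → ℝ → ℝ} (hu : FreeSol R u) : FreeSol R (pt u) where
  smooth := hu.smooth.dt
  pde t x y ht := by
    have h1 : dAlembert (pt u) t x y = pt (dAlembert u) t x y := by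
      unfold dAlembert
      rw [hu.smooth.p1_pt, hu.smooth.dx.p1_pt, hu.smooth.p2_pt, hu.smooth.dy.p2_pt]
      exact (((hu.smooth.dt.dt.hasDerivAt_t t x y).sub (hu.smooth.dx.dx.hasDerivAt_t t x y)).sub
        (hu.smooth.dy.dy.hasDerivAt_t t x y)).deriv.symm
    have h2 : (fun s => dAlembert u s x y) =ᶠ[𝓝 t] fun _ => 0 :=
      (lt_mem_nhds ht).mono fun s hs => hu.pde s x y hs
    rw [h1]
    unfold pt
    rw [h2.deriv_eq]; simp
  supp0 := hu.supp1
  supp1 x y h := by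
    rw [hu.pde0 le_rfl, p1_zero_of_far hu.suppx x y h, p2_zero_of_far hu.suppy x y h, add_zero]

theorem FreeSol.p1_dAlembert {R : ℝ} {u : ℝ → ℝ → ℝ → ℝ} (hu : FreeSol R u) {t : ℝ} (ht : 0 < t)
    (x y : ℝ) : p1 (p1 (p1 u)) t x y = p1 (pt (pt u)) t x y - p1 (p2 (p2 u)) t x y := by
  have h1 : p1 (dAlembert u) t x y
      = p1 (pt (pt u)) t x y - p1 (p1 (p1 u)) t x y - p1 (p2 (p2 u)) t x y :=
    (((hu.smooth.dt.dt.hasDerivAt_x t x y).sub (hu.smooth.dx.dx.hasDerivAt_x t x y)).sub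
        (hu.smooth.dy.dy.hasDerivAt_x t x y)).deriv
  have h2 : p1 (dAlembert u) t x y = 0 := by
    simp only [p1, hu.pde t _ _ ht, deriv_const]
  linarith

theorem FreeSol.p2_dAlembert {R : ℝ} {u : ℝ → ℝ → ℝ → ℝ} (hu : FreeSol R u) {t : ℝ} (ht : 0 < t)
    (x y : ℝ) : p2 (p1 (p1 u)) t x y = p2 (pt (pt u)) t x y - p2 (p2 (p2 u)) t x y := by
  have h1 : p2 (dAlembert u) t x y
      = p2 (pt (pt u)) t x y - p2 (p1 (p1 u)) t x y - p2 (p2 (p2 u)) t x y :=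
    (((hu.smooth.dt.dt.hasDerivAt_y t x y).sub (hu.smooth.dx.dx.hasDerivAt_y t x y)).sub
        (hu.smooth.dy.dy.hasDerivAt_y t x y)).deriv
  have h2 : p2 (dAlembert u) t x y = 0 := by
    simp only [p2, hu.pde t _ _ ht, deriv_const]
  linarith

theorem FreeSol.dx {R : ℝ} {u : ℝ → ℝ → ℝ → ℝ} (hu : FreeSol R u) : FreeSol R (p1 u) where
  smooth := hu.smooth.dx
  pde t x y ht := by
    have h := hu.p1_dAlembert ht x y
    unfold dAlembert
    rw [← hu.smooth.p1_pt, ← hu.smooth.dt.p1_pt, hu.smooth.p2_p1, hu.smooth.dy.p2_p1]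
    linarith
  supp0 := hu.suppx
  supp1 x y h := by
    rw [← hu.smooth.p1_pt]
    exact p1_zero_of_far hu.supp1 x y h

theorem FreeSol.drot {R : ℝ} {u : ℝ → ℝ → ℝ → ℝ} (hu : FreeSol R u) : FreeSol R (rot u) where
  smooth := hu.smooth.drot
  pde t x y ht := by
    have s := hu.smooth
    have h1 := hu.p1_dAlembert ht x y
    have h2 := hu.p2_dAlembert ht x y
    have e1 : p1 (p1 (rot u)) t x y
        = rot (p1 (p1 u)) t x y + p2 (p1 u) t x y + p1 (p2 u) t x y := by
      have : p1 (rot u) = fun t x y => rot (p1 u) t x y + p2 u t x y := by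
        funext t x y; exact s.p1_rot t x y
      rw [this, ← s.dx.p1_rot]
      exact ((s.dx.drot.hasDerivAt_x t x y).add (s.dy.hasDerivAt_x t x y)).deriv
    have e2 : p2 (p2 (rot u)) t x y
        = rot (p2 (p2 u)) t x y - p1 (p2 u) t x y - p2 (p1 u) t x y := by
      have : p2 (rot u) = fun t x y => rot (p2 u) t x y - p1 u t x y := by
        funext t x y; exact s.p2_rot t x y
      rw [this, ← s.dy.p2_rot]
      exact ((s.dy.drot.hasDerivAt_y t x y).sub (s.dx.hasDerivAt_y t x y)).deriv
    unfold dAlembert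
    rw [s.pt_rot, s.dt.pt_rot, e1, e2]
    unfold rot
    rw [h1, h2]
    ring
  supp0 x y h := by
    unfold rot; rw [hu.suppx x y h, hu.suppy x y h]; ring
  supp1 x y h := by
    rw [hu.smooth.pt_rot]
    unfold rot
    rw [p1_zero_of_far hu.supp1 x y h, p2_zero_of_far hu.supp1 x y h]; ring

/-- The function `u` in the rotated coordinates `x = a ω + b ω^⊥`, with `ω = (c, d)` and
`ω^⊥ = (-d, c)`. -/
def turn (c d : ℝ) (u : ℝ → ℝ → ℝ → ℝ) : ℝ → ℝ → ℝ → ℝ :=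
  fun t a b => u t (a * c - b * d) (a * d + b * c)

theorem Smooth3.turn {u : ℝ → ℝ → ℝ → ℝ} (hu : Smooth3 u) (c d : ℝ) : Smooth3 (turn c d u) := by
  have h2 : ContDiff ℝ (⊤ : ℕ∞) (fun p : ℝ × ℝ × ℝ =>
    ((p.1, p.2.1 * c - p.2.2 * d, p.2.1 * d + p.2.2 * c) : ℝ × ℝ × ℝ)) := by fun_prop
  have := ContDiff.comp hu h2
  exact this

theorem pt_turn (c d : ℝ) (u : ℝ → ℝ → ℝ → ℝ) : pt (turn c d u) = turn c d (pt u) := rfl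

theorem Smooth3.p1_turn {u : ℝ → ℝ → ℝ → ℝ} (hu : Smooth3 u) (c d : ℝ) : p1 (_root_.turn c d u)
    = fun t a b => c * _root_.turn c d (p1 u) t a b + d * _root_.turn c d (p2 u) t a b := by
  funext t a b
  have h1 : HasDerivAt (fun a : ℝ => a * c - b * d) c a := by
    simpa using ((hasDerivAt_id a).mul_const c).sub_const (b * d)
  have h2 : HasDerivAt (fun a : ℝ => a * d + b * c) d a := by
    simpa using ((hasDerivAt_id a).mul_const d).add_const (b * c)
  refine (hu.chain (hasDerivAt_const a t) h1 h2).deriv.trans ?_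
  simp only [_root_.turn]; ring

theorem Smooth3.p2_turn {u : ℝ → ℝ → ℝ → ℝ} (hu : Smooth3 u) (c d : ℝ) : p2 (_root_.turn c d u)
    = fun t a b => - d * _root_.turn c d (p1 u) t a b + c * _root_.turn c d (p2 u) t a b := by
  funext t a b
  have h1 : HasDerivAt (fun b : ℝ => a * c - b * d) (-d) b := by
    simpa using ((hasDerivAt_id b).mul_const d).const_sub (a * c)
  have h2 : HasDerivAt (fun b : ℝ => a * d + b * c) c b := by
    simpa using ((hasDerivAt_id b).mul_const c).const_add (a * d)
  refine (hu.chain (hasDerivAt_const b t) h1 h2).deriv.trans ?_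
  simp only [_root_.turn]; ring

theorem FreeSol.turn {R : ℝ} {u : ℝ → ℝ → ℝ → ℝ} (hu : FreeSol R u) {c d : ℝ}
    (hcd : c ^ 2 + d ^ 2 = 1) : FreeSol R (turn c d u) where
  smooth := hu.smooth.turn c d
  pde t a b ht := by
    have s := hu.smooth
    have h := hu.pde t (a * c - b * d) (a * d + b * c) ht
    have e1 : p1 (p1 (_root_.turn c d u)) t a b = c * p1 (_root_.turn c d (p1 u)) t a b
        + d * p1 (_root_.turn c d (p2 u)) t a b := by
      rw [s.p1_turn]
      exact ((((s.dx.turn c d).hasDerivAt_x t a b).const_mul c).add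
        (((s.dy.turn c d).hasDerivAt_x t a b).const_mul d)).deriv
    have e2 : p2 (p2 (_root_.turn c d u)) t a b = - d * p2 (_root_.turn c d (p1 u)) t a b
        + c * p2 (_root_.turn c d (p2 u)) t a b := by
      rw [s.p2_turn]
      exact ((((s.dx.turn c d).hasDerivAt_y t a b).const_mul (-d)).add
        (((s.dy.turn c d).hasDerivAt_y t a b).const_mul c)).deriv
    unfold dAlembert at h ⊢
    rw [e1, e2, s.dx.p1_turn, s.dy.p1_turn, s.dx.p2_turn, s.dy.p2_turn, pt_turn, pt_turn,
      s.p2_p1]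
    simp only [_root_.turn]
    linear_combination h - (p1 (p1 u) t (a * c - b * d) (a * d + b * c)
      + p2 (p2 u) t (a * c - b * d) (a * d + b * c)) * hcd
  supp0 a b h := hu.supp0 _ _ (by
    calc R ^ 2 < a ^ 2 + b ^ 2 := h
      _ = (a * c - b * d) ^ 2 + (a * d + b * c) ^ 2 := by
        linear_combination -(a ^ 2 + b ^ 2) * hcd)
  supp1 a b h := hu.supp1 _ _ (by
    calc R ^ 2 < a ^ 2 + b ^ 2 := h
      _ = (a * c - b * d) ^ 2 + (a * d + b * c) ^ 2 := by
        linear_combination -(a ^ 2 + b ^ 2) * hcd)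

theorem Smooth3.rot_turn {u : ℝ → ℝ → ℝ → ℝ} (hu : Smooth3 u) {c d : ℝ} :
    rot (_root_.turn c d u) = _root_.turn c d (rot u) := by
  funext t a b
  unfold rot
  rw [hu.p1_turn, hu.p2_turn]
  simp only [_root_.turn]
  ring

/-! ### Interval integrals depending on a parameter -/

theorem hasDerivAt_param {f f' : ℝ → ℝ → ℝ} (hf : Continuous f.uncurry)
    (hf' : Continuous f'.uncurry) (h : ∀ s x, HasDerivAt (fun s => f s x) (f' s x) s)
    (a b s : ℝ) : HasDerivAt (fun s => ∫ x in a..b, f s x) (∫ x in a..b, f' s x) s := by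
  obtain ⟨M, hM⟩ := ((isCompact_Icc (a := s - 1) (b := s + 1)).prod
    (isCompact_uIcc (a := a) (b := b))).exists_bound_of_continuousOn hf'.continuousOn
  refine (intervalIntegral.hasDerivAt_integral_of_dominated_loc_of_deriv_le
    (s := Set.Icc (s - 1) (s + 1)) (bound := fun _ => M) (F' := f')
    (Icc_mem_nhds (by linarith) (by linarith)) ?_ ?_ ?_ ?_ ?_ ?_).2
  · exact Eventually.of_forall fun x => (hf.comp (Continuous.prodMk_right x)).aestronglyMeasurable
  · exact (hf.comp (Continuous.prodMk_right s)).intervalIntegrable _ _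
  · exact (hf'.comp (Continuous.prodMk_right s)).aestronglyMeasurable
  · exact Eventually.of_forall fun t ht x hx => hM (x, t) ⟨hx, Set.uIoc_subset_uIcc ht⟩
  · exact intervalIntegrable_const
  · exact Eventually.of_forall fun t ht x hx => h x t

theorem hasDerivAt_param2 {F F' : ℝ → ℝ → ℝ → ℝ}
    (hF : Continuous fun p : ℝ × ℝ × ℝ => F p.1 p.2.1 p.2.2)
    (hF' : Continuous fun p : ℝ × ℝ × ℝ => F' p.1 p.2.1 p.2.2)
    (h : ∀ s x y, HasDerivAt (fun s => F s x y) (F' s x y) s) (a b c d s : ℝ) :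
    HasDerivAt (fun s => ∫ x in a..b, ∫ y in c..d, F s x y)
      (∫ x in a..b, ∫ y in c..d, F' s x y) s := by
  have hc : ∀ {F : ℝ → ℝ → ℝ → ℝ}, Continuous (fun p : ℝ × ℝ × ℝ => F p.1 p.2.1 p.2.2) →
      Continuous (Function.uncurry fun s x => ∫ y in c..d, F s x y) := by
    intro F hF
    refine intervalIntegral.continuous_parametric_intervalIntegral_of_continuous'
      (f := fun (p : ℝ × ℝ) y => F p.1 p.2 y) ?_ c d
    exact hF.comp (by fun_prop : Continuous fun p : (ℝ × ℝ) × ℝ => (p.1.1, p.1.2, p.2))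
  refine hasDerivAt_param (hc hF) (hc hF') (fun s x => ?_) a b s
  refine hasDerivAt_param (f := fun s y => F s x y) (f' := fun s y => F' s x y) ?_ ?_
    (fun s y => h s x y) c d s
  · exact hF.comp (by fun_prop : Continuous fun p : ℝ × ℝ => (p.1, x, p.2))
  · exact hF'.comp (by fun_prop : Continuous fun p : ℝ × ℝ => (p.1, x, p.2))

/-- A function supported in a set of diameter at most `D` has integral at most `M * D`. -/
theorem abs_integral_le_of_support {f : ℝ → ℝ} {a b M D : ℝ} (hab : a ≤ b) (hD : 0 ≤ D)
    (hM : ∀ x ∈ Set.Icc a b, |f x| ≤ M)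
    (hS : ∀ x ∈ Set.Icc a b, ∀ y ∈ Set.Icc a b, f x ≠ 0 → f y ≠ 0 → y - x ≤ D) :
    |∫ x in a..b, f x| ≤ M * D := by
  have hM0 : 0 ≤ M := (abs_nonneg _).trans (hM a ⟨le_rfl, hab⟩)
  set S : Set ℝ := {x | x ∈ Set.Icc a b ∧ f x ≠ 0} with hSdef
  rcases S.eq_empty_or_nonempty with hE | hne
  · have : ∫ x in a..b, f x = ∫ x in a..b, (0 : ℝ) := by
      refine intervalIntegral.integral_congr fun x hx => ?_
      rw [Set.uIcc_of_le hab] at hx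
      by_contra hfx
      have : x ∈ S := ⟨hx, hfx⟩
      rw [hE] at this; exact this
    rw [this]; simp; positivity
  · have hbdd : BddBelow S := ⟨a, fun x hx => hx.1.1⟩
    set m := sInf S
    have hSm : ∀ x ∈ S, x ∈ Set.Icc m (m + D) := by
      intro x hx
      refine ⟨csInf_le hbdd hx, ?_⟩
      have : x - D ≤ m := le_csInf hne fun y hy => by
        have := hS y hy.1 x hx.1 hy.2 hx.2; linarith
      linarith
    rw [intervalIntegral.integral_of_le hab, setIntegral_eq_of_subset_of_forall_sdiff_eq_zero
      (s := Set.Ioc a b ∩ Set.Icc m (m + D)) measurableSet_Ioc Set.inter_subset_left]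
    · have h1 : volume (Set.Ioc a b ∩ Set.Icc m (m + D)) ≤ ENNReal.ofReal D := by
        refine (measure_mono Set.inter_subset_right).trans ?_
        rw [Real.volume_Icc]; simp
      have h2 := norm_setIntegral_le_of_norm_le_const (μ := volume)
        (s := Set.Ioc a b ∩ Set.Icc m (m + D)) (f := f) (C := M)
        (h1.trans_lt ENNReal.ofReal_lt_top) (fun x hx => hM x ⟨hx.1.1.le, hx.1.2⟩)
      refine h2.trans (mul_le_mul_of_nonneg_left ?_ hM0)
      rw [Measure.real]
      exact ENNReal.toReal_le_of_le_ofReal hD h1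
    · intro x hx
      by_contra hfx
      exact hx.2 ⟨hx.1, hSm x ⟨⟨hx.1.1.le, hx.1.2⟩, hfx⟩⟩

theorem integral_trim {f : ℝ → ℝ} {H L : ℝ} (h0 : 0 ≤ H) (hHL : H ≤ L)
    (h : ∀ x, |x| ≤ L → H < |x| → f x = 0) :
    ∫ x in -L..L, f x = ∫ x in -H..H, f x := by
  rw [intervalIntegral.integral_of_le (by linarith), intervalIntegral.integral_of_le (by linarith),
    ← integral_Icc_eq_integral_Ioc, ← integral_Icc_eq_integral_Ioc]
  refine setIntegral_eq_of_subset_of_forall_sdiff_eq_zero measurableSet_Icc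
    (Set.Icc_subset_Icc (by linarith) hHL) fun x hx => h x (abs_le.2 hx.1) ?_
  by_contra hc
  exact hx.2 (abs_le.1 (not_lt.1 hc))

theorem integral_eq_trim {f : ℝ → ℝ} {H : ℝ} (h0 : 0 ≤ H) (h : ∀ x, H < |x| → f x = 0) :
    ∫ x, f x = ∫ x in -H..H, f x := by
  rw [intervalIntegral.integral_of_le (by linarith), ← integral_Icc_eq_integral_Ioc]
  refine (setIntegral_eq_integral_of_forall_compl_eq_zero fun x hx => h x ?_).symm
  by_contra hc
  exact hx (abs_le.1 (not_lt.1 hc))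

theorem tendsto_integral2 {F : ℝ → ℝ → ℝ → ℝ} {G : ℝ → ℝ → ℝ} {M a b c d : ℝ}
    (hF : ∀ᶠ s in atTop, Continuous fun p : ℝ × ℝ => F s p.1 p.2)
    (hM : ∀ᶠ s in atTop, ∀ x y, |F s x y| ≤ M)
    (hlim : ∀ x y, Tendsto (fun s => F s x y) atTop (𝓝 (G x y))) :
    Tendsto (fun s => ∫ x in a..b, ∫ y in c..d, F s x y) atTop
      (𝓝 (∫ x in a..b, ∫ y in c..d, G x y)) := by
  refine intervalIntegral.tendsto_integral_filter_of_dominated_convergence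
    (fun _ => M * |d - c|) ?_ ?_ intervalIntegrable_const ?_
  · filter_upwards [hF] with s hs
    exact (intervalIntegral.continuous_parametric_intervalIntegral_of_continuous'
      (f := fun x y => F s x y) hs c d).aestronglyMeasurable
  · filter_upwards [hM] with s hs
    exact Eventually.of_forall fun x _ =>
      intervalIntegral.norm_integral_le_of_norm_le_const fun y _ => hs x y
  · refine Eventually.of_forall fun x _ => ?_
    refine intervalIntegral.tendsto_integral_filter_of_dominated_convergence
      (fun _ => M) ?_ ?_ intervalIntegrable_const ?_
    · filter_upwards [hF] with s hs
      exact (hs.comp (Continuous.prodMk_right x)).aestronglyMeasurable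
    · filter_upwards [hM] with s hs
      exact Eventually.of_forall fun y _ => hs x y
    · exact Eventually.of_forall fun y _ => hlim x y

/-! ### Kirchhoff's formula -/

/-- Integrand of Kirchhoff's formula for the solution at time `t` and position `(r, 0)`, in terms
of the Cauchy data. The unit sphere of `ℝ³` is parametrised by
`(-cos β cos γ, sin β, cos β sin γ)` with area element `cos β dβ dγ`; the third coordinate is
ignored by functions on the plane. -/
def kirch (w : ℝ → ℝ → ℝ → ℝ) (t r γ β : ℝ) : ℝ :=
  cos β * (w 0 (r - t * (cos β * cos γ)) (t * sin β)
    + t * (pt w 0 (r - t * (cos β * cos γ)) (t * sin β)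
      - cos β * cos γ * p1 w 0 (r - t * (cos β * cos γ)) (t * sin β)
      + sin β * p2 w 0 (r - t * (cos β * cos γ)) (t * sin β)))

/-- The Kirchhoff integrand with initial time `s` instead of `0`. -/
def kirchAt (w : ℝ → ℝ → ℝ → ℝ) (t r s γ β : ℝ) : ℝ :=
  cos β * (w s (r - (t - s) * (cos β * cos γ)) ((t - s) * sin β)
    + (t - s) * (pt w s (r - (t - s) * (cos β * cos γ)) ((t - s) * sin β)
      - cos β * cos γ * p1 w s (r - (t - s) * (cos β * cos γ)) ((t - s) * sin β)
      + sin β * p2 w s (r - (t - s) * (cos β * cos γ)) ((t - s) * sin β)))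

/-- The derivative of `kirchAt` in `s`. For a solution of the wave equation it equals
`cos β * ((t - s) Δw - 2 θ·∇w - (t - s) D²w(θ, θ))`, which is `cos β / (t - s)` times the
Laplace–Beltrami operator of the unit sphere applied to `θ ↦ w(s, x + (t - s) θ)`, where
`x = (r, 0)`. -/
def kirchAt' (w : ℝ → ℝ → ℝ → ℝ) (t r s γ β : ℝ) : ℝ :=
  cos β * ((t - s) * pt (pt w) s (r - (t - s) * (cos β * cos γ)) ((t - s) * sin β)
    - 2 * (- cos β * cos γ * p1 w s (r - (t - s) * (cos β * cos γ)) ((t - s) * sin β)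
      + sin β * p2 w s (r - (t - s) * (cos β * cos γ)) ((t - s) * sin β))
    - (t - s) * ((cos β * cos γ) ^ 2
          * p1 (p1 w) s (r - (t - s) * (cos β * cos γ)) ((t - s) * sin β)
        - 2 * (cos β * cos γ) * sin β
          * p1 (p2 w) s (r - (t - s) * (cos β * cos γ)) ((t - s) * sin β)
        + sin β ^ 2 * p2 (p2 w) s (r - (t - s) * (cos β * cos γ)) ((t - s) * sin β)))

theorem hasDerivAt_kirchAt {w : ℝ → ℝ → ℝ → ℝ} (hw : Smooth3 w) (t r s γ β : ℝ) :
    HasDerivAt (fun s => kirchAt w t r s γ β) (kirchAt' w t r s γ β) s := by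
  have h0 : HasDerivAt (fun s : ℝ => t - s) (-1) s := (hasDerivAt_id s).const_sub t
  have h1 : HasDerivAt (fun s : ℝ => r - (t - s) * (cos β * cos γ)) (cos β * cos γ) s := by
    have := (h0.mul_const (cos β * cos γ)).const_sub r
    simpa using this
  have h2 : HasDerivAt (fun s : ℝ => (t - s) * sin β) (-sin β) s := by
    simpa using h0.mul_const (sin β)
  have key : ∀ {v : ℝ → ℝ → ℝ → ℝ}, Smooth3 v → _ := fun {v} hv =>
    hv.chain (hasDerivAt_id s) h1 h2
  have := ((key hw).add (h0.mul (((key hw.dt).sub ((key hw.dx).const_mul (cos β * cos γ))).add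
    ((key hw.dy).const_mul (sin β))))).const_mul (cos β)
  refine this.congr_deriv ?_
  simp only [id, kirchAt', hw.p1_pt, hw.p2_pt, hw.p2_p1, Pi.add_apply, Pi.sub_apply]
  ring

theorem continuous_kirchAt {w : ℝ → ℝ → ℝ → ℝ} (hw : Smooth3 w) (t r : ℝ) :
    Continuous fun p : ℝ × ℝ × ℝ => kirchAt w t r p.1 p.2.1 p.2.2 := by
  have key : ∀ {v : ℝ → ℝ → ℝ → ℝ}, Smooth3 v → Continuous fun p : ℝ × ℝ × ℝ =>
      v p.1 (r - (t - p.1) * (cos p.2.2 * cos p.2.1)) ((t - p.1) * sin p.2.2) :=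
    fun hv => hv.cont (by fun_prop) (by fun_prop) (by fun_prop)
  have h0 := key hw
  have h1 := key hw.dt
  have h2 := key hw.dx
  have h3 := key hw.dy
  unfold kirchAt
  exact (by fun_prop : Continuous fun p : ℝ × ℝ × ℝ => cos p.2.2).mul (h0.add
    ((by fun_prop : Continuous fun p : ℝ × ℝ × ℝ => t - p.1).mul ((h1.sub
      ((by fun_prop : Continuous fun p : ℝ × ℝ × ℝ => cos p.2.2 * cos p.2.1).mul h2)).add
      ((by fun_prop : Continuous fun p : ℝ × ℝ × ℝ => sin p.2.2).mul h3))))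

theorem continuous_kirchAt' {w : ℝ → ℝ → ℝ → ℝ} (hw : Smooth3 w) (t r : ℝ) :
    Continuous fun p : ℝ × ℝ × ℝ => kirchAt' w t r p.1 p.2.1 p.2.2 := by
  have key : ∀ {v : ℝ → ℝ → ℝ → ℝ}, Smooth3 v → Continuous fun p : ℝ × ℝ × ℝ =>
      v p.1 (r - (t - p.1) * (cos p.2.2 * cos p.2.1)) ((t - p.1) * sin p.2.2) :=
    fun hv => hv.cont (by fun_prop) (by fun_prop) (by fun_prop)
  have h1 := key hw.dt.dt
  have h2 := key hw.dx
  have h3 := key hw.dy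
  have h4 := key hw.dx.dx
  have h5 := key hw.dy.dx
  have h6 := key hw.dy.dy
  unfold kirchAt'
  have c1 : Continuous fun p : ℝ × ℝ × ℝ => t - p.1 := by fun_prop
  exact (by fun_prop : Continuous fun p : ℝ × ℝ × ℝ => cos p.2.2).mul
    (((c1.mul h1).sub (continuous_const.mul
      (((by fun_prop : Continuous fun p : ℝ × ℝ × ℝ => - cos p.2.2 * cos p.2.1).mul h2).add
      ((by fun_prop : Continuous fun p : ℝ × ℝ × ℝ => sin p.2.2).mul h3)))).sub
    (c1.mul ((((by fun_prop : Continuous fun p : ℝ × ℝ × ℝ =>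
        (cos p.2.2 * cos p.2.1) ^ 2).mul h4).sub
      ((by fun_prop : Continuous fun p : ℝ × ℝ × ℝ =>
        2 * (cos p.2.2 * cos p.2.1) * sin p.2.2).mul h5)).add
      ((by fun_prop : Continuous fun p : ℝ × ℝ × ℝ => sin p.2.2 ^ 2).mul h6))))

/-- The integral of the spherical Laplacian vanishes: in the coordinates `(γ, β)` it is the
divergence of a field with no flux through the boundary of the coordinate rectangle. -/
theorem integral_kirchAt' {R : ℝ} {w : ℝ → ℝ → ℝ → ℝ} (hw : FreeSol R w) (t r s : ℝ)
    (hs : 0 ≤ s) : ∫ γ in -π..π, ∫ β in -(π / 2)..(π / 2), kirchAt' w t r s γ β = 0 := by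
  have sm := hw.smooth
  have hX : ∀ γ β : ℝ, HasDerivAt (fun β : ℝ => r - (t - s) * (cos β * cos γ))
      ((t - s) * (sin β * cos γ)) β := by
    intro γ β
    refine ((((hasDerivAt_cos β).mul_const (cos γ)).const_mul (t - s)).const_sub r).congr_deriv ?_
    ring
  have hY : ∀ β : ℝ, HasDerivAt (fun β : ℝ => (t - s) * sin β) ((t - s) * cos β) β :=
    fun β => (hasDerivAt_sin β).const_mul (t - s)
  have hX' : ∀ γ β : ℝ, HasDerivAt (fun γ : ℝ => r - (t - s) * (cos β * cos γ))
      ((t - s) * (cos β * sin γ)) γ := by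
    intro γ β
    refine ((((hasDerivAt_cos γ).const_mul (cos β)).const_mul (t - s)).const_sub r).congr_deriv ?_
    ring
  have kc : ∀ {v : ℝ → ℝ → ℝ → ℝ}, Smooth3 v → Continuous fun p : ℝ × ℝ =>
      v s (r - (t - s) * (cos p.2 * cos p.1)) ((t - s) * sin p.2) :=
    fun hv => hv.cont (by fun_prop) (by fun_prop) (by fun_prop)
  -- the flux in the direction of `γ`
  set B' : ℝ → ℝ → ℝ := fun γ β =>
    cos γ * p1 w s (r - (t - s) * (cos β * cos γ)) ((t - s) * sin β)
    + sin γ * ((t - s) * (cos β * sin γ)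
      * p1 (p1 w) s (r - (t - s) * (cos β * cos γ)) ((t - s) * sin β)) with hB'
  have hB : ∀ γ β : ℝ, HasDerivAt (fun γ : ℝ =>
      sin γ * p1 w s (r - (t - s) * (cos β * cos γ)) ((t - s) * sin β)) (B' γ β) γ := by
    intro γ β
    refine ((hasDerivAt_sin γ).mul (sm.dx.chain (hasDerivAt_const γ s) (hX' γ β)
      (hasDerivAt_const γ _))).congr_deriv ?_
    simp only [hB']; ring
  have hBc : Continuous fun p : ℝ × ℝ => B' p.1 p.2 := by
    refine ((by fun_prop : Continuous fun p : ℝ × ℝ => cos p.1).mul (kc sm.dx)).add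
      ((by fun_prop : Continuous fun p : ℝ × ℝ => sin p.1).mul
        ((by fun_prop : Continuous fun p : ℝ × ℝ =>
          (t - s) * (cos p.2 * sin p.1)).mul (kc sm.dx.dx)))
  -- the flux in the direction of `β`
  set A' : ℝ → ℝ → ℝ := fun γ β => kirchAt' w t r s γ β - B' γ β with hA'
  have hA : ∀ γ β : ℝ, HasDerivAt (fun β : ℝ => cos β *
      (sin β * cos γ * p1 w s (r - (t - s) * (cos β * cos γ)) ((t - s) * sin β)
        + cos β * p2 w s (r - (t - s) * (cos β * cos γ)) ((t - s) * sin β))) (A' γ β) β := by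
    intro γ β
    have e1 := sm.dx.chain (hasDerivAt_const β s) (hX γ β) (hY β)
    have e2 := sm.dy.chain (hasDerivAt_const β s) (hX γ β) (hY β)
    refine ((hasDerivAt_cos β).mul ((((hasDerivAt_sin β).mul_const (cos γ)).mul e1).add
      ((hasDerivAt_cos β).mul e2))).congr_deriv ?_
    simp only [hA', hB', kirchAt', hw.pde0 hs, sm.p2_p1, Pi.add_apply, Pi.mul_apply]
    generalize p1 w s (r - (t - s) * (cos β * cos γ)) ((t - s) * sin β) = a1
    generalize p2 w s (r - (t - s) * (cos β * cos γ)) ((t - s) * sin β) = a2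
    generalize p1 (p1 w) s (r - (t - s) * (cos β * cos γ)) ((t - s) * sin β) = a11
    generalize p1 (p2 w) s (r - (t - s) * (cos β * cos γ)) ((t - s) * sin β) = a12
    generalize p2 (p2 w) s (r - (t - s) * (cos β * cos γ)) ((t - s) * sin β) = a22
    have t1 : sin γ ^ 2 = 1 - cos γ ^ 2 := sin_sq γ
    have t2 : sin β ^ 2 = 1 - cos β ^ 2 := sin_sq β
    ring_nf
    simp only [t1, t2]
    ring_nf
  have hkc : Continuous fun p : ℝ × ℝ => kirchAt' w t r s p.1 p.2 :=
    (continuous_kirchAt' sm t r).comp (by fun_prop : Continuous fun p : ℝ × ℝ => (s, p.1, p.2))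
  have hAc : Continuous fun p : ℝ × ℝ => A' p.1 p.2 := hkc.sub hBc
  have iA : ∀ γ, ∫ β in -(π / 2)..(π / 2), A' γ β = 0 := by
    intro γ
    rw [intervalIntegral.integral_eq_sub_of_hasDerivAt (fun β _ => hA γ β)
      ((hAc.comp (Continuous.prodMk_right γ)).intervalIntegrable _ _)]
    simp
  have iB : ∫ γ in -π..π, ∫ β in -(π / 2)..(π / 2), B' γ β = 0 := by
    rw [intervalIntegral_intervalIntegral_swap]
    · have : ∀ β, ∫ γ in -π..π, B' γ β = 0 := by
        intro β
        rw [intervalIntegral.integral_eq_sub_of_hasDerivAt (fun γ _ => hB γ β)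
          ((hBc.comp (Continuous.prodMk_left β)).intervalIntegrable _ _)]
        simp
      simp [this]
    · have : IntegrableOn (Function.uncurry B') (Set.uIcc (-π) π ×ˢ Set.uIcc (-(π / 2)) (π / 2)) :=
        ContinuousOn.integrableOn_compact (isCompact_uIcc.prod isCompact_uIcc) hBc.continuousOn
      exact this.mono_set (Set.prod_mono Set.uIoc_subset_uIcc Set.uIoc_subset_uIcc)
  rw [← iB]
  refine intervalIntegral.integral_congr fun γ _ => ?_
  have h1 : ∀ β, kirchAt' w t r s γ β = A' γ β + B' γ β := fun β => by simp only [hA']; ring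
  simp only [h1]
  have i1 : IntervalIntegrable (fun β => A' γ β) volume (-(π / 2)) (π / 2) :=
    (hAc.comp (Continuous.prodMk_right γ)).intervalIntegrable _ _
  have i2 : IntervalIntegrable (fun β => B' γ β) volume (-(π / 2)) (π / 2) :=
    (hBc.comp (Continuous.prodMk_right γ)).intervalIntegrable _ _
  rw [intervalIntegral.integral_add i1 i2, iA, zero_add]

/-- Kirchhoff's formula, after descent to two dimensions. -/
theorem kirchhoff {R : ℝ} {w : ℝ → ℝ → ℝ → ℝ} (hw : FreeSol R w) {t : ℝ} (ht : 0 ≤ t) (r : ℝ) :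
    4 * π * w t r 0 = ∫ γ in -π..π, ∫ β in -(π / 2)..(π / 2), kirch w t r γ β := by
  have hd := fun s => hasDerivAt_param2 (continuous_kirchAt hw.smooth t r)
    (continuous_kirchAt' hw.smooth t r) (hasDerivAt_kirchAt hw.smooth t r)
    (-π) π (-(π / 2)) (π / 2) s
  have hconst := constant_of_derivWithin_zero (a := 0) (b := t)
    (f := fun s => ∫ γ in -π..π, ∫ β in -(π / 2)..(π / 2), kirchAt w t r s γ β)
    (fun s _ => (hd s).differentiableAt.differentiableWithinAt)
    (fun s hs => by
      rw [(hd s).hasDerivWithinAt.derivWithin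
        (uniqueDiffOn_Icc (lt_of_le_of_lt hs.1 hs.2) _ ⟨hs.1, hs.2.le⟩)]
      exact integral_kirchAt' hw t r s hs.1) t ⟨ht, le_rfl⟩
  have h0 : ∀ γ β, kirchAt w t r 0 γ β = kirch w t r γ β := by
    intro γ β; simp [kirchAt, kirch]
  have h1 : ∀ γ β, kirchAt w t r t γ β = cos β * w t r 0 := by
    intro γ β; simp [kirchAt]
  simp only [h0, h1, intervalIntegral.integral_mul_const, integral_cos,
    intervalIntegral.integral_const] at hconst
  rw [← hconst, sin_neg, sin_pi_div_two, smul_eq_mul]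
  ring

/-! ### Decay of free solutions -/

theorem continuous_kirch {w : ℝ → ℝ → ℝ → ℝ} (hw : Smooth3 w) (t r : ℝ) :
    Continuous fun p : ℝ × ℝ => kirch w t r p.1 p.2 := by
  have := (continuous_kirchAt hw t r).comp (by fun_prop : Continuous fun p : ℝ × ℝ =>
    ((0 : ℝ), p.1, p.2))
  simpa [Function.comp_def, kirchAt, kirch] using this

theorem abs_kirch_le {w : ℝ → ℝ → ℝ → ℝ} {K : ℝ} (h0 : ∀ x y, |w 0 x y| ≤ K)
    (ht : ∀ x y, |pt w 0 x y| ≤ K) (h1 : ∀ x y, |p1 w 0 x y| ≤ K) (h2 : ∀ x y, |p2 w 0 x y| ≤ K)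
    {t : ℝ} (t0 : 0 ≤ t) (r γ β : ℝ) : |kirch w t r γ β| ≤ K * (1 + 3 * t) := by
  have K0 : 0 ≤ K := (abs_nonneg _).trans (h0 0 0)
  unfold kirch
  set X := r - t * (cos β * cos γ)
  set Y := t * sin β
  have c1 : |cos β * cos γ| ≤ 1 := by
    rw [abs_mul]; exact mul_le_one₀ (abs_cos_le_one β) (abs_nonneg _) (abs_cos_le_one γ)
  have e1 : |cos β * cos γ * p1 w 0 X Y| ≤ K := by
    rw [abs_mul]
    nlinarith [h1 X Y, abs_nonneg (p1 w 0 X Y), abs_nonneg (cos β * cos γ)]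
  have e2 : |sin β * p2 w 0 X Y| ≤ K := by
    rw [abs_mul]
    nlinarith [h2 X Y, abs_nonneg (p2 w 0 X Y), abs_nonneg (sin β), abs_sin_le_one β]
  have e3 : |pt w 0 X Y - cos β * cos γ * p1 w 0 X Y + sin β * p2 w 0 X Y| ≤ 3 * K := by
    have := ht X Y
    rw [abs_le] at *
    constructor <;> linarith [this.1, this.2, e1.1, e1.2, e2.1, e2.2]
  have e4 : |w 0 X Y + t * (pt w 0 X Y - cos β * cos γ * p1 w 0 X Y + sin β * p2 w 0 X Y)|
      ≤ K * (1 + 3 * t) := by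
    refine (abs_add_le _ _).trans ?_
    rw [abs_mul, abs_of_nonneg t0]
    nlinarith [h0 X Y]
  rw [abs_mul]
  nlinarith [abs_cos_le_one β, abs_nonneg (cos β), abs_nonneg (w 0 X Y +
    t * (pt w 0 X Y - cos β * cos γ * p1 w 0 X Y + sin β * p2 w 0 X Y))]

theorem kirch_support {R : ℝ} {w : ℝ → ℝ → ℝ → ℝ} (hw : FreeSol R w) (hR : 0 ≤ R) {t r γ β : ℝ}
    (h : kirch w t r γ β ≠ 0) : |r - t * (cos β * cos γ)| ≤ R ∧ |t * sin β| ≤ R := by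
  have : (r - t * (cos β * cos γ)) ^ 2 + (t * sin β) ^ 2 ≤ R ^ 2 := by
    by_contra hc
    push Not at hc
    exact h (by simp [kirch, hw.supp0 _ _ hc, hw.supp1 _ _ hc, hw.suppx _ _ hc, hw.suppy _ _ hc])
  constructor <;> refine abs_le_of_sq_le_sq ?_ hR <;>
    nlinarith [sq_nonneg (r - t * (cos β * cos γ)), sq_nonneg (t * sin β)]

/-- Finite speed of propagation. -/
theorem FreeSol.eq_zero {R : ℝ} {w : ℝ → ℝ → ℝ → ℝ} (hw : FreeSol R w) (hR : 0 ≤ R) {t r : ℝ}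
    (t0 : 0 ≤ t) (h : t + R < r) : w t r 0 = 0 := by
  have h0 : ∀ γ β, kirch w t r γ β = 0 := by
    intro γ β
    by_contra hc
    have h1 := (abs_le.1 (kirch_support hw hR hc).1).2
    have h2 : cos β * cos γ ≤ 1 := by
      nlinarith [cos_le_one β, cos_le_one γ, neg_one_le_cos β, neg_one_le_cos γ]
    nlinarith
  have := kirchhoff hw t0 r
  simp only [h0, intervalIntegral.integral_zero] at this
  have hp := pi_pos
  rcases mul_eq_zero.1 this with h | h
  · linarith
  · exact h

theorem sq_le_cos_sub_cos {x y : ℝ} (hx : 0 ≤ x) (hxy : x ≤ y) (hy : y ≤ π) :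
    (y - x) ^ 2 ≤ π ^ 2 / 2 * (cos x - cos y) := by
  have hp := pi_pos
  have e1 : cos x - cos y = 2 * (sin (y / 2 - x / 2) * sin (y / 2 + x / 2)) := by
    have ex : cos x = 2 * cos (x / 2) ^ 2 - 1 := by rw [← cos_two_mul]; ring_nf
    have ey : cos y = 2 * cos (y / 2) ^ 2 - 1 := by rw [← cos_two_mul]; ring_nf
    rw [ex, ey, sin_sub, sin_add]
    have sx := sin_sq (x / 2)
    have sy := sin_sq (y / 2)
    ring_nf at *
    rw [sx, sy]; ring
  have e2 : sin (y / 2 - x / 2) ≤ sin (y / 2 + x / 2) := by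
    rw [sin_sub, sin_add]
    nlinarith [mul_nonneg (cos_nonneg_of_neg_pi_div_two_le_of_le (x := y / 2) (by linarith)
      (by linarith)) (sin_nonneg_of_nonneg_of_le_pi (x := x / 2) (by linarith) (by linarith))]
  have e3 : 2 / π * (y / 2 - x / 2) ≤ sin (y / 2 - x / 2) :=
    mul_le_sin (by linarith) (by linarith)
  have e0 : 0 ≤ 2 / π * (y / 2 - x / 2) := by
    have : 0 ≤ y / 2 - x / 2 := by linarith
    positivity
  have e4 : (2 / π * (y / 2 - x / 2)) ^ 2 ≤ sin (y / 2 - x / 2) * sin (y / 2 + x / 2) := by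
    nlinarith
  have e5 : (2 / π * (y / 2 - x / 2)) ^ 2 = (y - x) ^ 2 / π ^ 2 := by
    field_simp
  rw [e1]
  rw [e5, div_le_iff₀ (by positivity)] at e4
  linarith

theorem sub_le_of_cos_near {R t r x y : ℝ} (t0 : 0 < t) (hx : 0 ≤ x) (hy' : y ≤ π)
    (h1 : |r - t * cos x| ≤ 2 * R) (h2 : |r - t * cos y| ≤ 2 * R) :
    y - x ≤ π * √(2 * R / t) := by
  rcases le_total y x with h | h
  · have := pi_pos
    have : 0 ≤ π * √(2 * R / t) := by positivity
    linarith
  have h3 := sq_le_cos_sub_cos hx h hy'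
  have h4 : t * (cos x - cos y) ≤ 4 * R := by
    rw [abs_le] at h1 h2; linarith
  have h5 : cos x - cos y ≤ 4 * R / t := by rw [le_div_iff₀ t0]; linarith
  have h6 : (y - x) ^ 2 ≤ π ^ 2 * (2 * R / t) := by
    calc (y - x) ^ 2 ≤ π ^ 2 / 2 * (4 * R / t) := h3.trans (by gcongr)
      _ = π ^ 2 * (2 * R / t) := by ring
  have h7 := Real.le_sqrt_of_sq_le h6
  rwa [Real.sqrt_mul (by positivity), Real.sqrt_sq pi_pos.le] at h7

/-- The integral over `β` gains a factor `1 / t` because the integrand vanishes unless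
`|t sin β| ≤ R`. -/
theorem abs_kirch_inner_le {R : ℝ} {w : ℝ → ℝ → ℝ → ℝ} (hw : FreeSol R w) (hR : 0 ≤ R) {K : ℝ}
    (h0 : ∀ x y, |w 0 x y| ≤ K)
    (ht : ∀ x y, |pt w 0 x y| ≤ K) (h1 : ∀ x y, |p1 w 0 x y| ≤ K) (h2 : ∀ x y, |p2 w 0 x y| ≤ K)
    {t : ℝ} (t1 : 1 ≤ t) (r γ : ℝ) :
    |∫ β in -(π / 2)..(π / 2), kirch w t r γ β| ≤ 4 * π * K * R := by
  have K0 : 0 ≤ K := (abs_nonneg _).trans (h0 0 0)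
  have hp := pi_pos
  have t0 : 0 < t := by linarith
  have hβ : ∀ β ∈ Set.Icc (-(π / 2)) (π / 2), kirch w t r γ β ≠ 0 → |β| ≤ π * R / (2 * t) := by
    intro β hβ hne
    have e1 := mul_abs_le_abs_sin (abs_le.2 hβ)
    have e2 := (kirch_support hw hR hne).2
    rw [abs_mul, abs_of_pos t0] at e2
    rw [le_div_iff₀ (by positivity)]
    have e3 : 2 / π * |β| * π = 2 * |β| := by field_simp
    nlinarith [mul_le_mul_of_nonneg_right e1 hp.le]
  refine (abs_integral_le_of_support (M := K * (1 + 3 * t)) (D := π * R / t) (by linarith)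
    (by positivity) (fun β _ => abs_kirch_le h0 ht h1 h2 t0.le r γ β) ?_).trans ?_
  · intro x hx y hy nx ny
    have e1 := (abs_le.1 (hβ x hx nx)).1
    have e2 := (abs_le.1 (hβ y hy ny)).2
    have e3 : π * R / t = π * R / (2 * t) + π * R / (2 * t) := by field_simp; ring
    linarith
  · have : K * (1 + 3 * t) * (π * R / t) = K * π * R * ((1 + 3 * t) / t) := by field_simp
    have h4 : (1 + 3 * t) / t ≤ 4 := by rw [div_le_iff₀ t0]; linarith
    rw [this]
    calc K * π * R * ((1 + 3 * t) / t) ≤ K * π * R * 4 := by gcongr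
      _ = 4 * π * K * R := by ring

/-- The support in `γ` of the inner integral: `t cos β` is within `R` of `t` where the integrand does
not vanish, so `β` may be replaced by `0` at the cost of doubling `R`. -/
theorem kirch_inner_support {R : ℝ} {w : ℝ → ℝ → ℝ → ℝ} (hw : FreeSol R w) (hR : 0 ≤ R)
    {t : ℝ} (t0 : 0 < t) (r γ : ℝ)
    (h : ∫ β in -(π / 2)..(π / 2), kirch w t r γ β ≠ 0) : |r - t * cos γ| ≤ 2 * R := by
  have hp := pi_pos
  obtain ⟨β, hβ, hne⟩ : ∃ β ∈ Set.Icc (-(π / 2)) (π / 2), kirch w t r γ β ≠ 0 := by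
    by_contra! hc
    refine h ?_
    rw [← intervalIntegral.integral_zero (a := -(π / 2)) (b := π / 2)]
    refine intervalIntegral.integral_congr fun β hβ => hc β ?_
    rwa [Set.uIcc_of_le (by linarith)] at hβ
  obtain ⟨e1, e2⟩ := kirch_support hw hR hne
  have c0 := cos_nonneg_of_mem_Icc hβ
  have c1 : t * (1 - cos β) ≤ R := by
    have : 1 - cos β ≤ |sin β| := by
      have : 1 - cos β ≤ sin β ^ 2 := by rw [sin_sq]; nlinarith [cos_le_one β]
      rw [← sq_abs] at this
      nlinarith [abs_sin_le_one β, abs_nonneg (sin β)]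
    rw [abs_mul, abs_of_pos t0] at e2
    nlinarith
  have c2 : |t * (1 - cos β) * cos γ| ≤ R := by
    have : 0 ≤ t * (1 - cos β) := mul_nonneg t0.le (by linarith [cos_le_one β])
    rw [abs_mul, abs_of_nonneg this]
    nlinarith [abs_cos_le_one γ, abs_nonneg (cos γ)]
  have : r - t * cos γ = (r - t * (cos β * cos γ)) - t * (1 - cos β) * cos γ := by ring
  rw [this]
  refine (abs_sub _ _).trans ?_
  linarith

/-- Decay like `r ^ (-1/2)` on the positive `x₁`-axis. For `t ≥ 1` the integrand of Kirchhoff's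
formula has size `O(t)` and is supported in a set of `β` of size `O(1 / t)` and a set of `γ` of
size `O(t ^ (-1/2))`, and `r ≤ t + R` wherever the solution does not vanish. -/
theorem decay_axis {R : ℝ} (hR : 0 ≤ R) : ∃ C : ℝ, 0 ≤ C ∧ ∀ (w : ℝ → ℝ → ℝ → ℝ) (K : ℝ),
    FreeSol R w → (∀ x y, |w 0 x y| ≤ K) → (∀ x y, |pt w 0 x y| ≤ K) →
    (∀ x y, |p1 w 0 x y| ≤ K) → (∀ x y, |p2 w 0 x y| ≤ K) →
    ∀ t r : ℝ, 0 ≤ t → √r * |w t r 0| ≤ C * K := by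
  have hp := pi_pos
  refine ⟨√(1 + R) * (2 * π + 2 * π * R * √(2 * R)), by positivity, ?_⟩
  intro w K hw h0 ht h1 h2 t r t0
  have K0 : 0 ≤ K := (abs_nonneg _).trans (h0 0 0)
  rcases lt_or_ge (t + R) r with hr | hr
  · rw [hw.eq_zero hR t0 hr]
    simp; positivity
  have hk : 4 * π * |w t r 0| = |∫ γ in -π..π, ∫ β in -(π / 2)..(π / 2), kirch w t r γ β| := by
    rw [← kirchhoff hw t0 r, abs_mul,
      abs_of_pos (show 0 < 4 * π by positivity)]
  suffices h : √r * (4 * π * |w t r 0|)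
      ≤ 4 * π * (√(1 + R) * (2 * π + 2 * π * R * √(2 * R)) * K) by
    have : √r * (4 * π * |w t r 0|) = 4 * π * (√r * |w t r 0|) := by ring
    rw [this] at h
    exact le_of_mul_le_mul_left h (by positivity)
  rw [hk]
  rcases le_total t 1 with t1 | t1
  · have e1 : |∫ γ in -π..π, ∫ β in -(π / 2)..(π / 2), kirch w t r γ β|
        ≤ 4 * K * π * (2 * π) := by
      refine abs_integral_le_of_support (by linarith) (by positivity) (fun γ hγ => ?_)
        (fun x hx y hy _ _ => by linarith [hx.1, hy.2])
      refine abs_integral_le_of_support (by linarith) (by positivity) (fun β hβ => ?_)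
        (fun x hx y hy _ _ => by linarith [hx.1, hy.2])
      refine (abs_kirch_le h0 ht h1 h2 t0 r γ β).trans ?_
      nlinarith
    have e2 : √r ≤ √(1 + R) := Real.sqrt_le_sqrt (by linarith)
    calc _ ≤ √(1 + R) * (4 * K * π * (2 * π)) := by gcongr
      _ ≤ √(1 + R) * (4 * K * π * (2 * π)) + 4 * π * (√(1 + R) * (2 * π * R * √(2 * R)) * K) := by
        have : 0 ≤ 4 * π * (√(1 + R) * (2 * π * R * √(2 * R)) * K) := by positivity
        linarith
      _ = _ := by ring
  · have tp : 0 < t := by linarith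
    have c : Continuous fun γ => ∫ β in -(π / 2)..(π / 2), kirch w t r γ β :=
      intervalIntegral.continuous_parametric_intervalIntegral_of_continuous'
        (f := fun γ β => kirch w t r γ β) (continuous_kirch hw.smooth t r) _ _
    have e1 : |∫ γ in -π..0, ∫ β in -(π / 2)..(π / 2), kirch w t r γ β|
        ≤ 4 * π * K * R * (π * √(2 * R / t)) := by
      refine abs_integral_le_of_support (by linarith) (by positivity)
        (fun γ _ => abs_kirch_inner_le hw hR h0 ht h1 h2 t1 r γ) ?_
      intro x hx y hy nx ny
      have a1 := kirch_inner_support hw hR tp r x nx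
      have a2 := kirch_inner_support hw hR tp r y ny
      rw [← cos_neg] at a1 a2
      have := sub_le_of_cos_near tp (by linarith [hy.2]) (by linarith [hx.1]) a2 a1
      linarith
    have e2 : |∫ γ in 0..π, ∫ β in -(π / 2)..(π / 2), kirch w t r γ β|
        ≤ 4 * π * K * R * (π * √(2 * R / t)) := by
      refine abs_integral_le_of_support (by linarith) (by positivity)
        (fun γ _ => abs_kirch_inner_le hw hR h0 ht h1 h2 t1 r γ) ?_
      intro x hx y hy nx ny
      exact sub_le_of_cos_near tp hx.1 hy.2 (kirch_inner_support hw hR tp r x nx)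
        (kirch_inner_support hw hR tp r y ny)
    -- `cos` is injective on each of the two halves, so that each carries one short interval of `γ`
    rw [← intervalIntegral.integral_add_adjacent_intervals (c.intervalIntegrable (-π) 0)
      (c.intervalIntegrable 0 π)]
    have e3 : √r ≤ √t * √(1 + R) := by
      rw [← Real.sqrt_mul tp.le]
      exact Real.sqrt_le_sqrt (by nlinarith)
    have e4 : √t * √(2 * R / t) = √(2 * R) := by
      rw [← Real.sqrt_mul tp.le]; congr 1; field_simp
    calc _ ≤ (√t * √(1 + R)) * (4 * π * K * R * (π * √(2 * R / t))
          + 4 * π * K * R * (π * √(2 * R / t))) := by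
          gcongr
          exact (abs_add_le _ _).trans (add_le_add e1 e2)
      _ = 8 * π ^ 2 * K * R * √(1 + R) * (√t * √(2 * R / t)) := by ring
      _ = 8 * π ^ 2 * K * R * √(1 + R) * √(2 * R) := by rw [e4]
      _ ≤ 8 * π ^ 2 * K * R * √(1 + R) * √(2 * R) + 4 * π * (√(1 + R) * (2 * π) * K) := by
        have : 0 ≤ 4 * π * (√(1 + R) * (2 * π) * K) := by positivity
        linarith
      _ = _ := by ring

theorem exists_bound_of_far {R : ℝ} {f : ℝ → ℝ → ℝ} (hf : Continuous fun p : ℝ × ℝ => f p.1 p.2)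
    (h : ∀ x y : ℝ, R ^ 2 < x ^ 2 + y ^ 2 → f x y = 0) : ∃ K, ∀ x y, |f x y| ≤ K := by
  obtain ⟨K, hK⟩ := ((isCompact_Icc (a := -|R|) (b := |R|)).prod
    (isCompact_Icc (a := -|R|) (b := |R|))).exists_bound_of_continuousOn hf.continuousOn
  have K0 : 0 ≤ K := (norm_nonneg _).trans (hK (0, 0) (by simp))
  refine ⟨K, fun x y => ?_⟩
  rcases lt_or_ge (R ^ 2) (x ^ 2 + y ^ 2) with h1 | h1
  · rw [h x y h1]; simpa
  · refine hK (x, y) ⟨abs_le.1 (sq_le_sq.1 ?_), abs_le.1 (sq_le_sq.1 ?_)⟩ <;>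
      nlinarith [sq_nonneg x, sq_nonneg y]

theorem Smooth3.cont0 {u : ℝ → ℝ → ℝ → ℝ} (hu : Smooth3 u) :
    Continuous fun p : ℝ × ℝ => u 0 p.1 p.2 :=
  hu.cont continuous_const continuous_fst continuous_snd

/-- A free solution with compactly supported data decays like `|x| ^ (-1/2)`, uniformly in `t` and
in the direction. -/
theorem FreeSol.decay {R : ℝ} {u : ℝ → ℝ → ℝ → ℝ} (hu : FreeSol R u) (hR : 0 ≤ R) :
    ∃ C : ℝ, 0 ≤ C ∧ ∀ t r c d : ℝ, 0 ≤ t → c ^ 2 + d ^ 2 = 1 →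
      √r * |u t (r * c) (r * d)| ≤ C := by
  obtain ⟨C, C0, hC⟩ := decay_axis hR
  have s := hu.smooth
  obtain ⟨K0, h0⟩ := exists_bound_of_far s.cont0 hu.supp0
  obtain ⟨K1, h1⟩ := exists_bound_of_far s.dt.cont0 hu.supp1
  obtain ⟨K2, h2⟩ := exists_bound_of_far s.dx.cont0 hu.suppx
  obtain ⟨K3, h3⟩ := exists_bound_of_far s.dy.cont0 hu.suppy
  have n0 := (abs_nonneg _).trans (h0 0 0)
  have n1 := (abs_nonneg _).trans (h1 0 0)
  have n2 := (abs_nonneg _).trans (h2 0 0)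
  have n3 := (abs_nonneg _).trans (h3 0 0)
  refine ⟨C * (K0 + K1 + K2 + K3), by positivity, fun t r c d t0 hcd => ?_⟩
  have c1 : |c| ≤ 1 := abs_le_one_iff_mul_self_le_one.2 (by nlinarith)
  have d1 : |d| ≤ 1 := abs_le_one_iff_mul_self_le_one.2 (by nlinarith)
  have aux : ∀ {a b x y A B : ℝ}, |a| ≤ 1 → |b| ≤ 1 → |x| ≤ A → |y| ≤ B →
      |a * x + b * y| ≤ A + B := by
    intro a b x y A B ha hb hx hy
    refine (abs_add_le _ _).trans ?_
    rw [abs_mul, abs_mul]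
    nlinarith [abs_nonneg a, abs_nonneg b, abs_nonneg x, abs_nonneg y]
  have := hC (_root_.turn c d u) (K0 + K1 + K2 + K3) (hu.turn hcd) (fun x y => ?_) (fun x y => ?_)
    (fun x y => ?_) (fun x y => ?_) t r t0
  · simpa [_root_.turn] using this
  · exact (h0 _ _).trans (by linarith)
  · rw [pt_turn]; exact (h1 _ _).trans (by linarith)
  · rw [s.p1_turn]
    exact (aux c1 d1 (h2 _ _) (h3 _ _)).trans (by linarith)
  · rw [s.p2_turn]
    exact (aux (by rwa [abs_neg]) c1 (h2 _ _) (h3 _ _)).trans (by linarith)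

/-! ### The radiation field -/

/-- The operator `R₂` in the direction `(1, 0)`, after the substitution `s = σ + η² / 2` which
removes the singularity of its kernel. -/
def halfInt (χ : ℝ → ℝ → ℝ) (σ : ℝ) : ℝ :=
  1 / (4 * π) * ∫ η : ℝ, ∫ τ : ℝ, χ (σ + η ^ 2 / 2) τ

theorem R2_eq_halfInt (φ : ℝ → ℝ → ℝ) (σ c d : ℝ) :
    R2 φ σ c d = halfInt (fun a b => φ (a * c - b * d) (a * d + b * c)) σ := by
  have h1 : ∫ s in Set.Ioi σ, Rline φ s c d / √(s - σ)
      = √2 * ∫ η in Set.Ioi (0 : ℝ), Rline φ (σ + η ^ 2 / 2) c d := by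
    have himg : (fun η : ℝ => σ + η ^ 2 / 2) '' Set.Ioi 0 = Set.Ioi σ := by
      ext s
      constructor
      · rintro ⟨η, hη, rfl⟩
        have : (0 : ℝ) < η := hη
        simp only [Set.mem_Ioi]; nlinarith [sq_pos_of_pos this]
      · intro hs
        have hs' : 0 < 2 * (s - σ) := by have : σ < s := hs; linarith
        exact ⟨√(2 * (s - σ)), Real.sqrt_pos.2 hs', by simp only [Real.sq_sqrt hs'.le]; ring⟩
    have hinj : Set.InjOn (fun η : ℝ => σ + η ^ 2 / 2) (Set.Ioi 0) := by
      intro x hx y hy hxy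
      have hx' : (0 : ℝ) < x := hx
      have hy' : (0 : ℝ) < y := hy
      have : x ^ 2 = y ^ 2 := by simp only at hxy; linarith
      exact (pow_left_inj₀ hx'.le hy'.le two_ne_zero).1 this
    have hder : ∀ η ∈ Set.Ioi (0 : ℝ), HasDerivWithinAt (fun η : ℝ => σ + η ^ 2 / 2) η
        (Set.Ioi 0) η := by
      intro η _
      have := (((hasDerivAt_id η).pow 2).div_const 2).const_add σ
      refine (this.congr_deriv ?_).hasDerivWithinAt
      simp
    rw [← himg, integral_image_eq_integral_abs_deriv_smul measurableSet_Ioi hder hinj,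
      ← integral_const_mul]
    refine setIntegral_congr_fun measurableSet_Ioi fun η hη => ?_
    have hη' : (0 : ℝ) < η := hη
    have e : √(σ + η ^ 2 / 2 - σ) = η / √2 := by
      rw [add_sub_cancel_left, Real.sqrt_div (sq_nonneg η), Real.sqrt_sq hη'.le]
    simp only [e, smul_eq_mul, abs_of_pos hη']
    field_simp
  have h2 : ∫ η : ℝ, Rline φ (σ + η ^ 2 / 2) c d
      = 2 * ∫ η in Set.Ioi (0 : ℝ), Rline φ (σ + η ^ 2 / 2) c d := by
    rw [← integral_comp_abs (f := fun η => Rline φ (σ + η ^ 2 / 2) c d)]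
    simp only [sq_abs]
  have h3 : halfInt (fun a b => φ (a * c - b * d) (a * d + b * c)) σ
      = 1 / (4 * π) * ∫ η : ℝ, Rline φ (σ + η ^ 2 / 2) c d := rfl
  rw [h3, h2, R2, h1]
  have := Real.sqrt_pos.2 (show (0 : ℝ) < 2 by norm_num)
  have hp := pi_pos
  field_simp
  ring

/-- Compact support of `χ` turns the improper integrals into integrals over a rectangle, which may
be chosen locally uniformly in `σ`. -/
theorem halfInt_trim {R H σ : ℝ} {χ : ℝ → ℝ → ℝ} (hR : 0 ≤ R) (hH : 0 ≤ H)
    (h : ∀ x y : ℝ, R ^ 2 < x ^ 2 + y ^ 2 → χ x y = 0) (hσ : R - σ ≤ H ^ 2 / 2) :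
    halfInt χ σ = 1 / (4 * π) * ∫ η in -H..H, ∫ τ in -R..R, χ (σ + η ^ 2 / 2) τ := by
  have h1 : ∀ x, ∫ τ, χ x τ = ∫ τ in -R..R, χ x τ := fun x =>
    integral_eq_trim hR fun τ hτ => h _ _ (by
      have : R ^ 2 < |τ| ^ 2 := by gcongr
      rw [sq_abs] at this
      nlinarith [sq_nonneg x])
  unfold halfInt
  simp only [h1]
  rw [integral_eq_trim hH]
  intro η hη
  have h2 : H ^ 2 < η ^ 2 := by rw [← sq_abs η]; gcongr
  have h3 : ∀ τ, χ (σ + η ^ 2 / 2) τ = 0 := fun τ => h _ _ (by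
    have : R < σ + η ^ 2 / 2 := by linarith
    nlinarith [sq_nonneg τ])
  simp [h3]

theorem hasDerivAt_halfInt {R : ℝ} {w : ℝ → ℝ → ℝ → ℝ} (hw : Smooth3 w) (hR : 0 ≤ R)
    (h : ∀ x y : ℝ, R ^ 2 < x ^ 2 + y ^ 2 → w 0 x y = 0) (σ : ℝ) :
    HasDerivAt (halfInt (w 0)) (halfInt (p1 w 0) σ) σ := by
  set H := 1 + |R - σ| with hHdef
  have hH : 0 ≤ H := by positivity
  have hH2 : 1 / 2 + (R - σ) ≤ H ^ 2 / 2 := by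
    nlinarith [le_abs_self (R - σ), abs_nonneg (R - σ), sq_nonneg (|R - σ|)]
  rw [halfInt_trim hR hH (p1_zero_of_far h) (by linarith)]
  have key : ∀ {v : ℝ → ℝ → ℝ → ℝ}, Smooth3 v → Continuous fun p : ℝ × ℝ × ℝ =>
      v 0 (p.1 + p.2.1 ^ 2 / 2) p.2.2 := fun hv => hv.cont (by fun_prop) (by fun_prop) (by fun_prop)
  have hd := (hasDerivAt_param2 (F := fun s η τ => w 0 (s + η ^ 2 / 2) τ)
    (F' := fun s η τ => p1 w 0 (s + η ^ 2 / 2) τ) (key hw) (key hw.dx) (fun s η τ => by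
      simpa using hw.chain (hasDerivAt_const s (0 : ℝ)) ((hasDerivAt_id s).add_const (η ^ 2 / 2))
        (hasDerivAt_const s τ)) (-H) H (-R) R σ).const_mul (1 / (4 * π))
  refine hd.congr_of_eventuallyEq ?_
  filter_upwards [lt_mem_nhds (show σ - 1 / 2 < σ by linarith)] with s hs
  exact halfInt_trim hR hH h (by linarith)

theorem halfInt_lin {R : ℝ} {χ ψ : ℝ → ℝ → ℝ} (hR : 0 ≤ R)
    (hχ : Continuous fun p : ℝ × ℝ => χ p.1 p.2) (hψ : Continuous fun p : ℝ × ℝ => ψ p.1 p.2)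
    (h : ∀ x y : ℝ, R ^ 2 < x ^ 2 + y ^ 2 → χ x y = 0)
    (h' : ∀ x y : ℝ, R ^ 2 < x ^ 2 + y ^ 2 → ψ x y = 0) (a b σ : ℝ) :
    halfInt (fun x y => a * χ x y + b * ψ x y) σ = a * halfInt χ σ + b * halfInt ψ σ := by
  set H := 1 + |R - σ| with hHdef
  have hH : 0 ≤ H := by positivity
  have hH2 : R - σ ≤ H ^ 2 / 2 := by
    nlinarith [le_abs_self (R - σ), abs_nonneg (R - σ), sq_nonneg (|R - σ|)]
  rw [halfInt_trim hR hH h hH2, halfInt_trim hR hH h' hH2, halfInt_trim hR hH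
    (fun x y hxy => by rw [h x y hxy, h' x y hxy]; simp) hH2]
  have key : ∀ {χ : ℝ → ℝ → ℝ}, Continuous (fun p : ℝ × ℝ => χ p.1 p.2) →
      (∀ x : ℝ, IntervalIntegrable (fun τ => χ x τ) volume (-R) R) ∧
      IntervalIntegrable (fun η => ∫ τ in -R..R, χ (σ + η ^ 2 / 2) τ) volume (-H) H := by
    intro χ hχ
    refine ⟨fun x => (hχ.comp (Continuous.prodMk_right x)).intervalIntegrable _ _, ?_⟩
    refine Continuous.intervalIntegrable ?_ _ _
    exact intervalIntegral.continuous_parametric_intervalIntegral_of_continuous'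
      (f := fun η τ => χ (σ + η ^ 2 / 2) τ)
      (hχ.comp (by fun_prop : Continuous fun p : ℝ × ℝ => (σ + p.1 ^ 2 / 2, p.2))) _ _
  have e1 : ∀ x, ∫ τ in -R..R, (a * χ x τ + b * ψ x τ)
      = a * (∫ τ in -R..R, χ x τ) + b * ∫ τ in -R..R, ψ x τ := by
    intro x
    rw [intervalIntegral.integral_add (((key hχ).1 x).const_mul a) (((key hψ).1 x).const_mul b),
      intervalIntegral.integral_const_mul, intervalIntegral.integral_const_mul]
  simp only [e1]
  rw [intervalIntegral.integral_add (((key hχ).2).const_mul a) (((key hψ).2).const_mul b),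
      intervalIntegral.integral_const_mul, intervalIntegral.integral_const_mul]
  ring

theorem halfInt_p2 {R : ℝ} {w : ℝ → ℝ → ℝ → ℝ} (hw : Smooth3 w) (hR : 0 ≤ R)
    (h : ∀ x y : ℝ, R ^ 2 < x ^ 2 + y ^ 2 → w 0 x y = 0) (σ : ℝ) :
    halfInt (p2 w 0) σ = 0 := by
  have h1 : ∀ x, ∫ τ, p2 w 0 x τ = 0 := by
    intro x
    rw [integral_eq_trim (H := R + 1) (by linarith) fun τ hτ => p2_zero_of_far h _ _ (by
      have : R ^ 2 < |τ| ^ 2 := by nlinarith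
      rw [sq_abs] at this
      nlinarith [sq_nonneg x]),
      intervalIntegral.integral_eq_sub_of_hasDerivAt (fun τ _ => hw.hasDerivAt_y 0 x τ)
        ((hw.dy.cont0.comp (Continuous.prodMk_right x)).intervalIntegrable _ _),
      h _ _ (by nlinarith [sq_nonneg x]), h _ _ (by nlinarith [sq_nonneg x]), sub_zero]
  simp [halfInt, h1]

theorem dF0_eq {R : ℝ} {u : ℝ → ℝ → ℝ → ℝ} (hu : FreeSol R u) (hR : 0 ≤ R) {c d : ℝ}
    (hcd : c ^ 2 + d ^ 2 = 1) (σ : ℝ) :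
    dF0 (u 0) (pt u 0) σ c d = - halfInt (p1 (p1 (turn c d u)) 0) σ
      + halfInt (p1 (pt (turn c d u)) 0) σ := by
  have hv := hu.turn hcd
  have s := hv.smooth
  have e0 : ∀ σ, R2 (u 0) σ c d = halfInt (turn c d u 0) σ := fun σ => R2_eq_halfInt _ _ _ _
  have e1 : ∀ σ, R2 (pt u 0) σ c d = halfInt (pt (turn c d u) 0) σ := fun σ =>
    R2_eq_halfInt _ _ _ _
  have e2 : ∀ σ, F0 (u 0) (pt u 0) σ c d
      = - halfInt (p1 (turn c d u) 0) σ + halfInt (pt (turn c d u) 0) σ := by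
    intro σ
    unfold F0
    simp only [e0, e1]
    rw [(hasDerivAt_halfInt s hR hv.supp0 σ).deriv]
  unfold dF0
  simp only [e2]
  exact ((hasDerivAt_halfInt s.dx hR hv.suppx σ).neg.add
    (hasDerivAt_halfInt s.dt hR hv.supp1 σ)).deriv

/-! ### Asymptotics along outgoing rays -/

theorem tendsto_mul_one_sub_cos (η : ℝ) :
    Tendsto (fun t : ℝ => t * (1 - cos (η / √t))) atTop (𝓝 (η ^ 2 / 2)) := by
  have h1 : Tendsto (fun t : ℝ => η / √t / 2) atTop (𝓝 0) := by
    simpa using ((tendsto_const_nhds (x := η)).div_atTop tendsto_sqrt_atTop).div_const 2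
  have h2 : Tendsto (fun t : ℝ => η ^ 2 / 2 * sinc (η / √t / 2) ^ 2) atTop
      (𝓝 (η ^ 2 / 2 * sinc 0 ^ 2)) :=
    (((continuous_sinc.tendsto 0).comp h1).pow 2).const_mul _
  rw [sinc_zero, one_pow, mul_one] at h2
  refine h2.congr' ?_
  filter_upwards [eventually_gt_atTop 0] with t ht
  set x := η / √t with hx
  have e1 : cos x = 1 - 2 * sin (x / 2) ^ 2 := by
    have := cos_two_mul (x / 2)
    rw [cos_sq'] at this
    rw [show 2 * (x / 2) = x by ring] at this
    linarith
  have e2 : sin (x / 2) = x / 2 * sinc (x / 2) := by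
    rcases eq_or_ne (x / 2) 0 with h | h
    · simp [h]
    · have hx0 : x ≠ 0 := fun h0 => h (by simp [h0])
      rw [sinc_of_ne_zero h]; field_simp
  have e3 : t * x ^ 2 = η ^ 2 := by
    rw [hx, div_pow, Real.sq_sqrt ht.le]; field_simp
  rw [e1, e2]
  linear_combination (-(1 / 2) * sinc (x / 2) ^ 2) * e3

theorem tendsto_mul_sin (b : ℝ) : Tendsto (fun t : ℝ => t * sin (b / t)) atTop (𝓝 b) := by
  have h1 : Tendsto (fun t : ℝ => b / t) atTop (𝓝 0) :=
    (tendsto_const_nhds (x := b)).div_atTop tendsto_id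
  have h2 : Tendsto (fun t : ℝ => b * sinc (b / t)) atTop (𝓝 (b * sinc 0)) :=
    ((continuous_sinc.tendsto 0).comp h1).const_mul _
  rw [sinc_zero, mul_one] at h2
  refine h2.congr' ?_
  filter_upwards [eventually_gt_atTop 0] with t ht
  rcases eq_or_ne (b / t) 0 with h | h
  · have : b = 0 := by rcases div_eq_zero_iff.1 h with h | h <;> [exact h; exact absurd h ht.ne']
    simp [this]
  · have hb : b ≠ 0 := fun hb => h (by simp [hb])
    rw [sinc_of_ne_zero h]; field_simp

theorem kirch_beta {R : ℝ} {w : ℝ → ℝ → ℝ → ℝ} (hw : FreeSol R w) (hR : 0 ≤ R) {t r γ β : ℝ}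
    (ht : 0 < t) (hβ : |β| ≤ π / 2) (h : kirch w t r γ β ≠ 0) : t * |β| ≤ π / 2 * R := by
  have hp := pi_pos
  have e1 := mul_abs_le_abs_sin hβ
  have e2 := (kirch_support hw hR h).2
  rw [abs_mul, abs_of_pos ht] at e2
  have e3 : 2 / π * |β| * π = 2 * |β| := by field_simp
  nlinarith [mul_le_mul_of_nonneg_right e1 hp.le]

theorem kirch_gamma {R : ℝ} {w : ℝ → ℝ → ℝ → ℝ} (hw : FreeSol R w) (hR : 0 ≤ R) {t σ γ β : ℝ}
    (ht : 0 < t) (hβ : |β| ≤ π / 2) (hγ : |γ| ≤ π) (h : kirch w t (t + σ) γ β ≠ 0) :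
    t * γ ^ 2 ≤ π ^ 2 * (R - σ) := by
  have hp := pi_pos
  have e1 := (abs_le.1 (kirch_support hw hR h).1).2
  have c0 := cos_nonneg_of_mem_Icc (abs_le.1 hβ)
  have c1 := cos_le_one β
  have e2 : γ ^ 2 ≤ π ^ 2 * (1 - cos β * cos γ) := by
    rcases le_total 0 (cos γ) with hc | hc
    · have e3 := sq_le_cos_sub_cos le_rfl (abs_nonneg γ) hγ
      rw [cos_abs, cos_zero, sub_zero, sq_abs] at e3
      have : cos β * cos γ ≤ cos γ := by nlinarith
      nlinarith [cos_le_one γ, sq_pos_of_pos hp]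
    · have : cos β * cos γ ≤ 0 := mul_nonpos_of_nonneg_of_nonpos c0 hc
      have : γ ^ 2 ≤ π ^ 2 := by rw [← sq_abs]; gcongr
      nlinarith [sq_pos_of_pos hp]
  calc t * γ ^ 2 ≤ t * (π ^ 2 * (1 - cos β * cos γ)) := by gcongr
    _ = π ^ 2 * (t - t * (cos β * cos γ)) := by ring
    _ ≤ π ^ 2 * (R - σ) := mul_le_mul_of_nonneg_left (by linarith) (sq_nonneg π)

/-- Kirchhoff's formula in the parabolically scaled variables `η = √t γ`, `b = t β`, in which the
integrand is supported in a rectangle independent of `t`. -/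
theorem kirchhoff_scaled {R : ℝ} {w : ℝ → ℝ → ℝ → ℝ} (hw : FreeSol R w) (hR : 0 ≤ R) {t σ H : ℝ}
    (ht : 0 < t) (hH : 0 ≤ H) (hHσ : π ^ 2 * (R - σ) ≤ H ^ 2) (tH : H ≤ π * √t)
    (tR : R ≤ t) :
    √t * w t (t + σ) 0 = 1 / (4 * π) * ∫ η in -H..H, ∫ b in -(π / 2 * R)..(π / 2 * R),
      kirch w t (t + σ) (η / √t) (b / t) / t := by
  have hp := pi_pos
  have st : 0 < √t := Real.sqrt_pos.2 ht
  have hk := kirchhoff hw ht.le (t + σ)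
  have e1 : ∀ γ, ∫ β in -(π / 2)..(π / 2), kirch w t (t + σ) γ β
      = ∫ b in -(π / 2 * R)..(π / 2 * R), kirch w t (t + σ) γ (b / t) / t := by
    intro γ
    rw [intervalIntegral.integral_div, ← integral_trim (L := π / 2 * t) (by positivity)
      (mul_le_mul_of_nonneg_left tR (by positivity)), intervalIntegral.integral_comp_div (f := kirch w t (t + σ) γ) ht.ne']
    · have : π / 2 * t / t = π / 2 := by field_simp
      rw [neg_div, this, smul_eq_mul]; field_simp
    · intro b hb hb'
      by_contra hc
      have a1 : |b / t| ≤ π / 2 := by rwa [abs_div, abs_of_pos ht, div_le_iff₀ ht]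
      have a2 := kirch_beta hw hR ht a1 hc
      rw [abs_div, abs_of_pos ht, mul_div_cancel₀ _ ht.ne'] at a2
      linarith
  simp only [e1] at hk
  set g : ℝ → ℝ := fun γ => ∫ b in -(π / 2 * R)..(π / 2 * R), kirch w t (t + σ) γ (b / t) / t
  have e2 : ∫ η in -H..H, g (η / √t) = √t * ∫ γ in -π..π, g γ := by
    rw [← integral_trim (L := π * √t) hH tH, intervalIntegral.integral_comp_div (f := g) st.ne']
    · have : π * √t / √t = π := by field_simp
      rw [neg_div, this, smul_eq_mul]
    · intro η hη hη'
      have a0 : |η / √t| ≤ π := by rwa [abs_div, abs_of_pos st, div_le_iff₀ st]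
      have : ∀ b ∈ Set.uIcc (-(π / 2 * R)) (π / 2 * R),
          kirch w t (t + σ) (η / √t) (b / t) / t = 0 := by
        intro b hb
        rw [Set.uIcc_of_le (by linarith [mul_nonneg hp.le hR])] at hb
        by_contra hc
        have hc' : kirch w t (t + σ) (η / √t) (b / t) ≠ 0 := fun h => hc (by simp [h])
        have a1 : |b / t| ≤ π / 2 := by
          rw [abs_div, abs_of_pos ht, div_le_iff₀ ht]
          refine (abs_le.2 hb).trans ?_
          gcongr
        have a2 := kirch_gamma hw hR ht a1 a0 hc'
        rw [div_pow, Real.sq_sqrt ht.le, mul_div_cancel₀ _ ht.ne', ← sq_abs] at a2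
        nlinarith
      simp only [g]
      rw [intervalIntegral.integral_congr this]; simp
  rw [e2, ← hk]
  field_simp

/-- The radiation field of a free solution, computed from Kirchhoff's formula. -/
theorem FreeSol.tendsto_ray {R : ℝ} {w : ℝ → ℝ → ℝ → ℝ} (hw : FreeSol R w) (hR : 0 ≤ R) (σ : ℝ) :
    Tendsto (fun t => √(t + σ) * w t (t + σ) 0) atTop
      (𝓝 (halfInt (fun x y => pt w 0 x y - p1 w 0 x y) σ)) := by
  have hp := pi_pos
  have hp3 := pi_gt_three
  have s := hw.smooth
  set B := π / 2 * R with hB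
  have hB0 : 0 ≤ B := by positivity
  have hRB : R ≤ B := by nlinarith
  set H := π * (1 + |B - σ|) with hHdef
  have hH : 0 ≤ H := by positivity
  have hH1 : π ^ 2 * (B - σ) ≤ H ^ 2 := by
    rw [hHdef, mul_pow]
    gcongr
    nlinarith [le_abs_self (B - σ), abs_nonneg (B - σ)]
  have hH2 : B - σ ≤ H ^ 2 / 2 := by
    have := le_abs_self (B - σ)
    have h0 := abs_nonneg (B - σ)
    have : (1 + |B - σ|) ^ 2 ≤ H ^ 2 / 2 := by
      rw [hHdef, mul_pow]
      have : 2 ≤ π ^ 2 := by nlinarith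
      nlinarith [mul_le_mul_of_nonneg_right this (sq_nonneg (1 + |B - σ|))]
    nlinarith
  have hfar : ∀ x y : ℝ, B ^ 2 < x ^ 2 + y ^ 2 → pt w 0 x y - p1 w 0 x y = 0 := by
    intro x y hxy
    have : R ^ 2 < x ^ 2 + y ^ 2 := lt_of_le_of_lt (by gcongr) hxy
    rw [hw.supp1 x y this, hw.suppx x y this, sub_zero]
  rw [halfInt_trim hB0 hH hfar hH2]
  have hsq : Tendsto (fun t : ℝ => √(t + σ) / √t) atTop (𝓝 1) := by
    have h1 : Tendsto (fun t : ℝ => √(1 + σ / t)) atTop (𝓝 √(1 + 0)) :=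
      ((continuous_sqrt.tendsto _).comp
        (tendsto_const_nhds.add ((tendsto_const_nhds (x := σ)).div_atTop tendsto_id)))
    rw [add_zero, Real.sqrt_one] at h1
    refine h1.congr' ?_
    filter_upwards [eventually_gt_atTop 0] with t ht
    rw [← Real.sqrt_div' _ ht.le]
    congr 1
    field_simp
  obtain ⟨K0, h0⟩ := exists_bound_of_far s.cont0 hw.supp0
  obtain ⟨K1, h1⟩ := exists_bound_of_far s.dt.cont0 hw.supp1
  obtain ⟨K2, h2⟩ := exists_bound_of_far s.dx.cont0 hw.suppx
  obtain ⟨K3, h3⟩ := exists_bound_of_far s.dy.cont0 hw.suppy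
  have n0 := (abs_nonneg _).trans (h0 0 0)
  have n1 := (abs_nonneg _).trans (h1 0 0)
  have n2 := (abs_nonneg _).trans (h2 0 0)
  have n3 := (abs_nonneg _).trans (h3 0 0)
  have hmain : Tendsto (fun t => ∫ η in -H..H, ∫ b in -B..B,
      kirch w t (t + σ) (η / √t) (b / t) / t) atTop (𝓝 (∫ η in -H..H, ∫ b in -B..B,
        (pt w 0 (σ + η ^ 2 / 2) b - p1 w 0 (σ + η ^ 2 / 2) b))) := by
    refine tendsto_integral2 (M := (K0 + K1 + K2 + K3) * 4) ?_ ?_ ?_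
    · exact Eventually.of_forall fun t => ((continuous_kirch s t (t + σ)).comp
        (by fun_prop : Continuous fun p : ℝ × ℝ => (p.1 / √t, p.2 / t))).div_const t
    · filter_upwards [eventually_ge_atTop 1] with t ht η b
      have t0 : 0 < t := by linarith
      rw [abs_div, abs_of_pos t0, div_le_iff₀ t0]
      refine (abs_kirch_le (K := K0 + K1 + K2 + K3) (fun x y => (h0 x y).trans (by linarith))
        (fun x y => (h1 x y).trans (by linarith)) (fun x y => (h2 x y).trans (by linarith))
        (fun x y => (h3 x y).trans (by linarith)) t0.le _ _ _).trans ?_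
      rw [mul_assoc]
      gcongr
      linarith
    -- pointwise, `r - t cos β cos γ → σ + η² / 2` and `t sin β → b`; after division by `t` only
    -- the terms of the integrand with the factor `t` survive
    · intro η b
      have lb : Tendsto (fun t : ℝ => b / t) atTop (𝓝 0) :=
        (tendsto_const_nhds (x := b)).div_atTop tendsto_id
      have lg : Tendsto (fun t : ℝ => η / √t) atTop (𝓝 0) :=
        (tendsto_const_nhds (x := η)).div_atTop tendsto_sqrt_atTop
      have lcb : Tendsto (fun t : ℝ => cos (b / t)) atTop (𝓝 1) := by
        simpa [Function.comp_def] using (continuous_cos.tendsto 0).comp lb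
      have lsb : Tendsto (fun t : ℝ => sin (b / t)) atTop (𝓝 0) := by
        simpa [Function.comp_def] using (continuous_sin.tendsto 0).comp lb
      have lcg : Tendsto (fun t : ℝ => cos (η / √t)) atTop (𝓝 1) := by
        simpa [Function.comp_def] using (continuous_cos.tendsto 0).comp lg
      have lY := tendsto_mul_sin b
      have lX1 : Tendsto (fun t : ℝ => t * (1 - cos (b / t))) atTop (𝓝 0) := by
        have a1 := tendsto_mul_one_sub_cos b
        have a2 : Tendsto (fun t : ℝ => t * sin (b / t) * sin (b / t) / (1 + cos (b / t))) atTop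
            (𝓝 (b * 0 / (1 + 1))) :=
          (lY.mul lsb).div (lcb.const_add 1) (by norm_num)
        rw [mul_zero, zero_div] at a2
        refine a2.congr' ?_
        filter_upwards [lcb.eventually (lt_mem_nhds (show (0 : ℝ) < 1 by norm_num))] with t ht
        have : 1 + cos (b / t) ≠ 0 := by linarith
        rw [div_eq_iff this]
        linear_combination t * sin_sq (b / t)
      have lX : Tendsto (fun t : ℝ => t + σ - t * (cos (b / t) * cos (η / √t))) atTop
          (𝓝 (σ + η ^ 2 / 2)) := by
        have := (lX1.add (lcb.mul (tendsto_mul_one_sub_cos η))).const_add σ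
        rw [zero_add, one_mul] at this
        refine this.congr fun t => ?_
        ring
      have key : ∀ {v : ℝ → ℝ → ℝ → ℝ}, Smooth3 v → Tendsto (fun t : ℝ =>
          v 0 (t + σ - t * (cos (b / t) * cos (η / √t))) (t * sin (b / t))) atTop
          (𝓝 (v 0 (σ + η ^ 2 / 2) b)) := fun hv =>
        (hv.cont0.tendsto (σ + η ^ 2 / 2, b)).comp (lX.prodMk_nhds lY)
      have linv : Tendsto (fun t : ℝ => t⁻¹) atTop (𝓝 0) := tendsto_inv_atTop_zero
      have := lcb.mul ((linv.mul (key s)).add (((key s.dt).sub ((lcb.mul lcg).mul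
        (key s.dx))).add (lsb.mul (key s.dy))))
      simp only [zero_mul, one_mul, zero_add, add_zero] at this
      refine this.congr' ?_
      filter_upwards [eventually_gt_atTop 0] with t ht
      unfold kirch
      field_simp
  have := hsq.mul (hmain.const_mul (1 / (4 * π)))
  rw [one_mul] at this
  refine this.congr' ?_
  filter_upwards [eventually_gt_atTop 0, eventually_ge_atTop R,
    tendsto_sqrt_atTop.eventually_ge_atTop (H / π)] with t ht tR tH
  have st : 0 < √t := Real.sqrt_pos.2 ht
  rw [← kirchhoff_scaled hw hR ht hH ((by gcongr : π ^ 2 * (R - σ) ≤ π ^ 2 * (B - σ)).trans hH1)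
    (by rw [div_le_iff₀ hp] at tH; linarith) tR]
  field_simp

/-! ### Convergence rate -/

theorem hasDerivAt_sqrt_radius {x y : ℝ} (h : 0 < x ^ 2 + y ^ 2) :
    HasDerivAt (fun x => radius x y ^ ((1 : ℝ) / 2))
      (x / radius x y * (1 / (2 * √(radius x y)))) x := by
  have h1 : HasDerivAt (fun x : ℝ => x ^ 2 + y ^ 2) (2 * x) x := by
    simpa using ((hasDerivAt_id x).pow 2).add_const (y ^ 2)
  have h2 : 0 < radius x y := Real.sqrt_pos.2 h
  have h3 := (h1.sqrt h.ne').sqrt (x := x) (Real.sqrt_pos.2 h).ne'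
  have h4 : (fun x => radius x y ^ ((1 : ℝ) / 2)) = fun x => √√(x ^ 2 + y ^ 2) := by
    funext x; rw [← Real.sqrt_eq_rpow]; rfl
  rw [h4]
  refine h3.congr_deriv ?_
  change 2 * x / (2 * radius x y) / (2 * √(radius x y)) = _
  field_simp

theorem radius_comm (x y : ℝ) : radius x y = radius y x := by
  unfold radius; rw [add_comm]

theorem hasDerivAt_sqrt_radius' {x y : ℝ} (h : 0 < x ^ 2 + y ^ 2) :
    HasDerivAt (fun y => radius x y ^ ((1 : ℝ) / 2))
      (y / radius x y * (1 / (2 * √(radius x y)))) y := by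
  have := hasDerivAt_sqrt_radius (x := y) (y := x) (by linarith)
  simpa only [radius_comm _ x] using this

theorem Uop_eq {u : ℝ → ℝ → ℝ → ℝ} (hu : Smooth3 u) {c d r : ℝ} (hcd : c ^ 2 + d ^ 2 = 1)
    (hr : 0 < r) (t : ℝ) : Uop u t (r * c) (r * d)
      = 1 / 2 * (√r * (p1 (turn c d u) t r 0 - pt (turn c d u) t r 0))
        + 1 / 4 * (turn c d u t r 0 / √r) := by
  have hpos : 0 < (r * c) ^ 2 + (r * d) ^ 2 := by
    have : (r * c) ^ 2 + (r * d) ^ 2 = r ^ 2 := by linear_combination r ^ 2 * hcd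
    rw [this]; positivity
  have hrad : radius (r * c) (r * d) = r := by
    have : (r * c) ^ 2 + (r * d) ^ 2 = r ^ 2 := by linear_combination r ^ 2 * hcd
    rw [radius, this, Real.sqrt_sq hr.le]
  have e1 := ((hasDerivAt_sqrt_radius hpos).mul (hu.hasDerivAt_x t (r * c) (r * d))).deriv
  have e2 := ((hasDerivAt_sqrt_radius' hpos).mul (hu.hasDerivAt_y t (r * c) (r * d))).deriv
  have e3 := ((hu.hasDerivAt_t t (r * c) (r * d)).const_mul
    (radius (r * c) (r * d) ^ ((1 : ℝ) / 2))).deriv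
  have e1' : p1 (fun s y1 y2 => radius y1 y2 ^ ((1 : ℝ) / 2) * u s y1 y2) t (r * c) (r * d) = _ :=
    e1
  have e2' : p2 (fun s y1 y2 => radius y1 y2 ^ ((1 : ℝ) / 2) * u s y1 y2) t (r * c) (r * d) = _ :=
    e2
  have e3' : pt (fun s y1 y2 => radius y1 y2 ^ ((1 : ℝ) / 2) * u s y1 y2) t (r * c) (r * d) = _ :=
    e3
  have hs : 0 < √r := Real.sqrt_pos.2 hr
  unfold Uop
  rw [e1', e2', e3', hu.p1_turn, pt_turn]
  simp only [hrad, ← Real.sqrt_eq_rpow, turn, zero_mul, sub_zero, add_zero]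
  have a1 : r * c / r = c := by field_simp
  have a2 : r * d / r = d := by field_simp
  rw [a1, a2]
  generalize u t (r * c) (r * d) = A
  generalize p1 u t (r * c) (r * d) = A1
  generalize p2 u t (r * c) (r * d) = A2
  field_simp
  linear_combination (4 * A) * hcd

/-- The transport equation satisfied by `D (|x| ^ (1/2) v)` along the outgoing rays. -/
theorem FreeSol.hasDerivAt_ray {R : ℝ} {v : ℝ → ℝ → ℝ → ℝ} (hv : FreeSol R v) {σ r : ℝ}
    (hr : 0 < r) (ht : 0 ≤ r - σ) :
    HasDerivAt (fun r => 1 / 2 * (√r * (p1 v (r - σ) r 0 - pt v (r - σ) r 0))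
        + 1 / 4 * (v (r - σ) r 0 / √r))
      (-(1 / (2 * (r * √r))) * (rot (rot v) (r - σ) r 0 + 1 / 4 * v (r - σ) r 0)) r := by
  have s := hv.smooth
  have hs : 0 < √r := Real.sqrt_pos.2 hr
  have key : ∀ {w : ℝ → ℝ → ℝ → ℝ}, Smooth3 w → HasDerivAt (fun r => w (r - σ) r 0)
      (pt w (r - σ) r 0 + p1 w (r - σ) r 0) r := fun hw => by
    simpa using hw.chain ((hasDerivAt_id r).sub_const σ) (hasDerivAt_id r)
      (hasDerivAt_const r (0 : ℝ))
  have h1 := Real.hasDerivAt_sqrt hr.ne'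
  have h2 := ((h1.mul ((key s.dx).sub (key s.dt))).const_mul (1 / 2)).add
    (((key s).div h1 hs.ne').const_mul (1 / 4))
  refine h2.congr_deriv ?_
  have e1 : rot (rot v) (r - σ) r 0
      = r * (r * p2 (p2 v) (r - σ) r 0 - p1 v (r - σ) r 0) := by
    conv_lhs => unfold rot
    change r * p2 (rot v) (r - σ) r 0 - 0 * p1 (rot v) (r - σ) r 0 = _
    rw [s.p2_rot]
    unfold rot
    ring
  rw [e1, s.p1_pt]
  simp only [Pi.sub_apply]
  rw [hv.pde0 ht]
  generalize p1 v (r - σ) r 0 = a1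
  generalize pt v (r - σ) r 0 = a0
  generalize v (r - σ) r 0 = a
  generalize p2 (p2 v) (r - σ) r 0 = a22
  generalize p1 (p1 v) (r - σ) r 0 = a11
  generalize pt (p1 v) (r - σ) r 0 = a01
  have hq : √r ^ 2 = r := Real.sq_sqrt hr.le
  generalize √r = q at *
  subst hq
  field_simp
  ring

/-- The limit along the outgoing rays is `∂_σ F₀`. -/
theorem FreeSol.tendsto_dF0 {R : ℝ} {u : ℝ → ℝ → ℝ → ℝ} (hu : FreeSol R u) (hR : 0 ≤ R) {c d : ℝ}
    (hcd : c ^ 2 + d ^ 2 = 1) (σ : ℝ) :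
    Tendsto (fun r => 1 / 2 * (√r * (p1 (_root_.turn c d u) (r - σ) r 0
        - pt (_root_.turn c d u) (r - σ) r 0)) + 1 / 4 * (_root_.turn c d u (r - σ) r 0 / √r))
      atTop (𝓝 (dF0 (u 0) (pt u 0) σ c d)) := by
  rw [dF0_eq hu hR hcd]
  have hv := hu.turn hcd
  set v := _root_.turn c d u
  have s := hv.smooth
  -- `∂₁ v - ∂ₜ v` is itself a free wave, hence has a limit along the ray
  have l1 := (hv.dx.sub hv.dt).tendsto_ray hR σ
  have l2 := hv.tendsto_ray hR σ
  have hshift : Tendsto (fun r : ℝ => r - σ) atTop atTop := by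
    simpa [sub_eq_add_neg] using tendsto_atTop_add_const_right atTop (-σ) tendsto_id
  have l1' := l1.comp hshift
  have l2' := l2.comp hshift
  simp only [Function.comp_def, sub_add_cancel] at l1' l2'
  have l3 := (l1'.const_mul (1 / 2)).add ((l2'.mul tendsto_inv_atTop_zero).const_mul (1 / 4))
  rw [mul_zero, mul_zero, add_zero] at l3
  -- the wave equation turns `(∂ₜ - ∂₁)(∂₁ - ∂ₜ) v` into `2 ∂₁∂ₜ v - 2 ∂₁² v - ∂₂² v`, and the
  -- integral of the last term vanishes
  have hval : 1 / 2 * halfInt (fun x y => pt (fun t x y => p1 v t x y - pt v t x y) 0 x y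
      - p1 (fun t x y => p1 v t x y - pt v t x y) 0 x y) σ
      = -halfInt (p1 (p1 v) 0) σ + halfInt (p1 (pt v) 0) σ := by
    have f1 : ∀ x y, pt (fun t x y => p1 v t x y - pt v t x y) 0 x y
        - p1 (fun t x y => p1 v t x y - pt v t x y) 0 x y
        = 1 * (2 * p1 (pt v) 0 x y + (-2) * p1 (p1 v) 0 x y) + (-1) * p2 (p2 v) 0 x y := by
      intro x y
      have g1 : pt (fun t x y => p1 v t x y - pt v t x y) 0 x y
          = pt (p1 v) 0 x y - pt (pt v) 0 x y :=
        ((s.dx.hasDerivAt_t 0 x y).sub (s.dt.hasDerivAt_t 0 x y)).deriv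
      have g2 : p1 (fun t x y => p1 v t x y - pt v t x y) 0 x y
          = p1 (p1 v) 0 x y - p1 (pt v) 0 x y :=
        ((s.dx.hasDerivAt_x 0 x y).sub (s.dt.hasDerivAt_x 0 x y)).deriv
      rw [g1, g2, s.p1_pt, hv.pde0 le_rfl]
      ring
    simp only [f1]
    have z1 := hv.dt.suppx
    have z2 := hv.dx.suppx
    rw [halfInt_lin hR ((s.dt.dx.cont0.const_mul 2).add (s.dx.dx.cont0.const_mul (-2)))
        s.dy.dy.cont0 (fun x y h => by rw [z1 x y h, z2 x y h]; simp)
        (p2_zero_of_far hv.suppy),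
      halfInt_lin hR s.dt.dx.cont0 s.dx.dx.cont0 z1 z2, halfInt_p2 s.dy hR hv.suppy]
    ring
  rw [hval] at l3
  refine l3.congr' ?_
  filter_upwards [eventually_gt_atTop 0] with r hr
  have hq : √r ^ 2 = r := Real.sq_sqrt hr.le
  have hs : 0 < √r := Real.sqrt_pos.2 hr
  congr 2
  rw [div_eq_mul_inv]
  field_simp
  rw [hq]

/-- Integration of a derivative of size `C / r ^ 2` from `r₀` to infinity, by monotonicity of
`V - C / r` and `V + C / r`. -/
theorem abs_sub_le_of_hasDerivAt {V V' : ℝ → ℝ} {r₀ C L : ℝ} (hr₀ : 0 < r₀)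
    (hV : ∀ r, r₀ ≤ r → HasDerivAt V (V' r) r) (hV' : ∀ r, r₀ ≤ r → |V' r| ≤ C / r ^ 2)
    (hL : Tendsto V atTop (𝓝 L)) : |V r₀ - L| ≤ C / r₀ := by
  have hC : Tendsto (fun r : ℝ => C / r) atTop (𝓝 0) :=
    (tendsto_const_nhds (x := C)).div_atTop tendsto_id
  have hd : ∀ r, r₀ ≤ r → HasDerivAt (fun r : ℝ => C / r) (-(C / r ^ 2)) r := by
    intro r hr
    have hr' : r ≠ 0 := by linarith
    have := (hasDerivAt_inv hr').const_mul C
    simpa [div_eq_mul_inv] using this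
  have m1 : MonotoneOn (fun r => V r - C / r) (Set.Ici r₀) := by
    refine monotoneOn_of_deriv_nonneg (convex_Ici r₀)
      (fun r hr => ((hV r hr).sub (hd r hr)).continuousAt.continuousWithinAt)
      (fun r hr => ((hV r (interior_subset hr)).sub
        (hd r (interior_subset hr))).differentiableAt.differentiableWithinAt) fun r hr => ?_
    have hder : deriv (fun r => V r - C / r) r = V' r - -(C / r ^ 2) :=
      ((hV r (interior_subset hr)).sub (hd r (interior_subset hr))).deriv
    rw [hder]
    have := (abs_le.1 (hV' r (interior_subset hr))).1
    linarith
  have m2 : AntitoneOn (fun r => V r + C / r) (Set.Ici r₀) := by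
    refine antitoneOn_of_deriv_nonpos (convex_Ici r₀)
      (fun r hr => ((hV r hr).add (hd r hr)).continuousAt.continuousWithinAt)
      (fun r hr => ((hV r (interior_subset hr)).add
        (hd r (interior_subset hr))).differentiableAt.differentiableWithinAt) fun r hr => ?_
    have hder : deriv (fun r => V r + C / r) r = V' r + -(C / r ^ 2) :=
      ((hV r (interior_subset hr)).add (hd r (interior_subset hr))).deriv
    rw [hder]
    have := (abs_le.1 (hV' r (interior_subset hr))).2
    linarith
  have i1 : V r₀ - C / r₀ ≤ L - 0 := by
    refine ge_of_tendsto (hL.sub hC) ?_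
    filter_upwards [eventually_ge_atTop r₀] with r hr
    exact m1 Set.self_mem_Ici hr hr
  have i2 : L + 0 ≤ V r₀ + C / r₀ := by
    refine le_of_tendsto (hL.add hC) ?_
    filter_upwards [eventually_ge_atTop r₀] with r hr
    exact m2 Set.self_mem_Ici hr hr
  rw [abs_le]
  constructor <;> linarith

/-- The error is `O(1 / |x|)`, uniformly in `t ≥ 0`. -/
theorem FreeSol.abs_Uop_sub_dF0_le {R : ℝ} {u : ℝ → ℝ → ℝ → ℝ} (hu : FreeSol R u) (hR : 0 ≤ R) :
    ∃ C : ℝ, 0 ≤ C ∧ ∀ t r c d : ℝ, 0 ≤ t → 0 < r → c ^ 2 + d ^ 2 = 1 →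
      |Uop u t (r * c) (r * d) - dF0 (u 0) (pt u 0) (r - t) c d| ≤ C / r := by
  obtain ⟨C1, C1', h1⟩ := hu.decay hR
  obtain ⟨C2, C2', h2⟩ := hu.drot.drot.decay hR
  refine ⟨1 / 2 * (C2 + 1 / 4 * C1), by positivity, fun t r c d ht hr hcd => ?_⟩
  have hv := hu.turn hcd
  rw [Uop_eq hu.smooth hcd hr]
  have := abs_sub_le_of_hasDerivAt (C := 1 / 2 * (C2 + 1 / 4 * C1)) hr
    (fun s hs => hv.hasDerivAt_ray (σ := r - t) (r := s) (by linarith) (by linarith))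
    (fun s hs => ?_) (hu.tendsto_dF0 hR hcd (r - t))
  · simpa using this
  · have s0 : 0 < s := by linarith
    have hq : √s ^ 2 = s := Real.sq_sqrt s0.le
    have hp : 0 < √s := Real.sqrt_pos.2 s0
    have b1 := h1 (s - (r - t)) s c d (by linarith) hcd
    have b2 := h2 (s - (r - t)) s c d (by linarith) hcd
    rw [hu.smooth.rot_turn, hu.smooth.drot.rot_turn]
    simp only [_root_.turn, zero_mul, sub_zero, add_zero]
    generalize u (s - (r - t)) (s * c) (s * d) = A at *
    generalize rot (rot u) (s - (r - t)) (s * c) (s * d) = B at *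
    rw [abs_mul, abs_neg, abs_of_pos (by positivity : 0 < 1 / (2 * (s * √s)))]
    have b3 : √s * |B + 1 / 4 * A| ≤ C2 + 1 / 4 * C1 := by
      have := abs_add_le B (1 / 4 * A)
      rw [abs_mul, abs_of_pos (show (0 : ℝ) < 1 / 4 by norm_num)] at this
      nlinarith
    have b4 : 1 / (2 * (s * √s)) * |B + 1 / 4 * A|
        = 1 / 2 * (√s * |B + 1 / 4 * A|) / s ^ 2 := by
      have : s ^ 2 = s * √s ^ 2 := by rw [hq]; ring
      rw [this]; field_simp
    rw [b4]
    gcongr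

theorem SmoothCompact2.exists_far {f : ℝ → ℝ → ℝ} (hf : SmoothCompact2 f) :
    ∃ R : ℝ, 0 ≤ R ∧ ∀ x y : ℝ, R ^ 2 < x ^ 2 + y ^ 2 → f x y = 0 := by
  obtain ⟨r, hr⟩ := hf.2.isCompact.isBounded.subset_closedBall (0 : ℝ × ℝ)
  refine ⟨2 * |r|, by positivity, fun x y h => ?_⟩
  by_contra hne
  have h1 : ((x, y) : ℝ × ℝ) ∈ Metric.closedBall (0 : ℝ × ℝ) r :=
    hr (subset_tsupport _ hne)
  rw [mem_closedBall_zero_iff, Prod.norm_def, max_le_iff] at h1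
  simp only [Real.norm_eq_abs] at h1
  have hx : x ^ 2 ≤ |r| ^ 2 := by
    rw [← sq_abs x]; exact pow_le_pow_left₀ (abs_nonneg _) (h1.1.trans (le_abs_self r)) 2
  have hy : y ^ 2 ≤ |r| ^ 2 := by
    rw [← sq_abs y]; exact pow_le_pow_left₀ (abs_nonneg _) (h1.2.trans (le_abs_self r)) 2
  nlinarith

/-- for the free wave solution, `U⁰` is approximated by the
`σ`-derivative of the radiation field in the region `|x| ≥ 1/(2ε)`. -/
theorem free_U_approx_radiation (φ0 φ1 : ℝ → ℝ → ℝ)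
    (hφ0 : SmoothCompact2 φ0) (hφ1 : SmoothCompact2 φ1)
    (u0 : ℝ → ℝ → ℝ → ℝ) (hu0 : IsFreeSolution φ0 φ1 u0) :
    ∃ C : ℝ, 0 < C ∧ ∀ ε : ℝ, 0 < ε →
      (∀ t x1 x2 : ℝ, 0 ≤ t → 1 / (2 * ε) ≤ radius x1 x2 →
        |Uop u0 t x1 x2 - dF0 φ0 φ1 (radius x1 x2 - t)
            (x1 / radius x1 x2) (x2 / radius x1 x2)| ≤ C * ε) ∧
      (∀ t σ ω1 ω2 : ℝ, ω1 ^ 2 + ω2 ^ 2 = 1 → 0 ≤ t → 1 / (2 * ε) ≤ t + σ →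
        |Vop u0 t σ ω1 ω2 - dF0 φ0 φ1 σ ω1 ω2| ≤ C * ε) := by
  obtain ⟨R0, hR0, far0⟩ := hφ0.exists_far
  obtain ⟨R1, hR1, far1⟩ := hφ1.exists_far
  obtain ⟨hs, hpde, hi0, hi1⟩ := hu0
  have hu : FreeSol (R0 + R1) u0 :=
    { smooth := hs
      pde := hpde
      supp0 := fun x y h => by rw [hi0]; exact far0 x y (by nlinarith)
      supp1 := fun x y h => by rw [hi1]; exact far1 x y (by nlinarith) }
  obtain ⟨C, C0, hC⟩ := hu.abs_Uop_sub_dF0_le (by linarith)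
  have e0 : u0 0 = φ0 := by funext x y; exact hi0 x y
  have e1 : pt u0 0 = φ1 := by funext x y; exact hi1 x y
  rw [e0, e1] at hC
  have bound : ∀ {ε r : ℝ}, 0 < ε → 1 / (2 * ε) ≤ r → 0 < r ∧ C / r ≤ (2 * C + 1) * ε := by
    intro ε r hε hr
    have hr0 : 0 < r := lt_of_lt_of_le (by positivity) hr
    refine ⟨hr0, ?_⟩
    rw [div_le_iff₀ (by positivity)] at hr
    rw [div_le_iff₀ hr0]
    nlinarith [mul_le_mul_of_nonneg_left hr C0, mul_pos hε hr0]
  -- `2 * C` would do for the estimates; `2 * C + 1` is also positive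
  refine ⟨2 * C + 1, by positivity, fun ε hε => ⟨?_, ?_⟩⟩
  · intro t x1 x2 ht hr
    obtain ⟨hr0, hb⟩ := bound hε hr
    have hsq : radius x1 x2 ^ 2 = x1 ^ 2 + x2 ^ 2 := Real.sq_sqrt (by positivity)
    have := hC t (radius x1 x2) (x1 / radius x1 x2) (x2 / radius x1 x2) ht hr0 (by
      rw [div_pow, div_pow, ← add_div, ← hsq, div_self (by positivity)])
    rw [mul_div_cancel₀ _ hr0.ne', mul_div_cancel₀ _ hr0.ne'] at this
    exact this.trans hb
  · intro t σ ω1 ω2 hω ht hr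
    obtain ⟨hr0, hb⟩ := bound hε hr
    have := hC t (t + σ) ω1 ω2 ht hr0 hω
    rw [add_sub_cancel_left] at this
    exact this.trans hb

end
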